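/- arXiv:1606.06935 — 11 statements merged into one kernel-verified Lean document; each statement's English description precedes it below -/
import Mathlib

section
/- Let w : ℕ → ℤ be an infinite sequence taking values in {-1, 1}. Then for every n ≥ 1, the abelian complexity of w satisfies ρ_w(n) = (M_w(n) − m_w(n))/2 + 1. -/
/-- The partial sum `Σ_w(i, n) = w(i) + w(i+1) + ⋯ + w(i+n−1)`. -/
def pSum (w : ℕ → ℤ) (i n : ℕ) : ℤ := ∑ j ∈ Finset.range n, w (i + j)

/-- The Parikh (abelianization) vector of the factor of `w` of length `n`
starting at position `i`: for each letter `a` it records the number of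
occurrences of `a` in that factor. -/
def parikh (w : ℕ → ℤ) (n i : ℕ) : ℤ → ℕ :=
  fun a => ((Finset.range n).filter fun j => w (i + j) = a).card

/-- The abelian complexity of `w`: the number of abelian equivalence classes
of factors of `w` of length `n`, i.e. the number of distinct Parikh vectors. -/
noncomputable def abelianComplexity (w : ℕ → ℤ) (n : ℕ) : ℕ :=
  (Set.range (parikh w n)).ncard

theorem ivt_aux (f : ℕ → ℤ) (hf : ∀ i, f (i+1) ≤ f i + 1) (k : ℤ) (i d : ℕ)
    (h1 : f i ≤ k) (h2 : k ≤ f (i + d)) : ∃ j, f j = k := by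
  induction d with
  | zero => exact ⟨i, le_antisymm h1 h2⟩
  | succ d ih =>
    by_cases h : k ≤ f (i + d)
    · exact ih h
    · refine ⟨i + d + 1, ?_⟩
      have h3 := hf (i + d)
      have h4 : k ≤ f (i + d + 1) := h2
      omega

theorem ivt_aux2 (f : ℕ → ℤ) (hf : ∀ i, f (i+1) ≤ f i + 1) (hf' : ∀ i, f i ≤ f (i+1) + 1)
    (k : ℤ) (i j : ℕ) (h1 : f i ≤ k) (h2 : k ≤ f j) : ∃ l, f l = k := by
  rcases le_total i j with h | h
  · obtain ⟨d, rfl⟩ := Nat.exists_eq_add_of_le h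
    exact ivt_aux f hf k i d h1 h2
  · obtain ⟨d, rfl⟩ := Nat.exists_eq_add_of_le h
    obtain ⟨l, hl⟩ := ivt_aux (fun i => - f i) (fun i => by have := hf' i; omega) (-k) j d
      (by omega) (by omega)
    exact ⟨l, by simpa using hl⟩

theorem pSum_step (w : ℕ → ℤ) (i n : ℕ) : pSum w (i+1) n + w i = pSum w i n + w (i+n) := by
  unfold pSum
  rw [← Finset.sum_range_succ (fun j => w (i + j)), Finset.sum_range_succ']
  simp only [add_zero]
  congr 1
  apply Finset.sum_congr rfl
  intro j _
  congr 1
  ring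

theorem pSum_eq (w : ℕ → ℤ) (hw : ∀ n, w n = 1 ∨ w n = -1) (i n : ℕ) :
    pSum w i n = 2 * (parikh w n i 1 : ℤ) - n := by
  unfold pSum parikh
  induction n with
  | zero => simp
  | succ n ih =>
    rw [Finset.sum_range_succ, ih, Finset.range_add_one, Finset.filter_insert]
    rcases hw (i + n) with h | h
    · simp [h]; ring
    · simp [h]; ring

theorem parikh_neg (w : ℕ → ℤ) (hw : ∀ n, w n = 1 ∨ w n = -1) (i n : ℕ) :
    parikh w n i 1 + parikh w n i (-1) = n := by
  unfold parikh
  have h : (Finset.range n).filter (fun j => w (i + j) = -1)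
      = (Finset.range n).filter (fun j => ¬ w (i + j) = 1) := by
    apply Finset.filter_congr
    intro j _
    rcases hw (i + j) with h | h <;> simp [h]
  rw [h, Finset.card_filter_add_card_filter_not, Finset.card_range]

theorem parikh_ext (w : ℕ → ℤ) (hw : ∀ n, w n = 1 ∨ w n = -1) (i j n : ℕ)
    (h : parikh w n i 1 = parikh w n j 1) : parikh w n i = parikh w n j := by
  funext a
  by_cases h1 : a = 1
  · rw [h1, h]
  by_cases h2 : a = -1
  · have e1 := parikh_neg w hw i n
    have e2 := parikh_neg w hw j n
    rw [h2]; omega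
  have key : ∀ i, parikh w n i a = 0 := by
    intro i
    unfold parikh
    rw [Finset.card_eq_zero, Finset.filter_eq_empty_iff]
    intro l _ hl
    rcases hw (i + l) with h | h <;> omega
  rw [key, key]

/-- For a sequence `w` with values in `{-1, 1}`, with
`M_w(n) = max_{i ≥ 0} Σ_w(i,n)` and `m_w(n) = min_{i ≥ 0} Σ_w(i,n)`, the
abelian complexity satisfies `ρ_w(n) = (M_w(n) − m_w(n))/2 + 1` for `n ≥ 1`. -/
theorem abelianComplexity_eq_max_sub_min
    (w : ℕ → ℤ) (hw : ∀ n, w n = 1 ∨ w n = -1)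
    (M m : ℕ → ℤ)
    (hM : ∀ n, IsGreatest (Set.range fun i => pSum w i n) (M n))
    (hm : ∀ n, IsLeast (Set.range fun i => pSum w i n) (m n))
    (n : ℕ) (hn : 1 ≤ n) :
    (abelianComplexity w n : ℤ) = (M n - m n) / 2 + 1 := by
  obtain ⟨⟨p, hp⟩, hMu⟩ := hM n
  obtain ⟨⟨q, hq⟩, hml⟩ := hm n
  have hU : ∀ i, pSum w i n ≤ M n := fun i => hMu ⟨i, rfl⟩
  have hL : ∀ i, m n ≤ pSum w i n := fun i => hml ⟨i, rfl⟩
  simp only at hp hq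
  rw [← hp] at hU ⊢
  rw [← hq] at hL ⊢
  simp only [pSum_eq w hw] at hU hL ⊢
  have hinj : Set.InjOn (fun v : ℤ → ℕ => v 1) (Set.range (parikh w n)) := by
    rintro _ ⟨i, rfl⟩ _ ⟨j, rfl⟩ h
    exact parikh_ext w hw i j n h
  have himg : (fun v : ℤ → ℕ => v 1) '' (Set.range (parikh w n))
      = ↑(Finset.Icc (parikh w n q 1) (parikh w n p 1)) := by
    ext k
    simp only [Set.mem_image, Set.mem_range, exists_exists_eq_and, Finset.coe_Icc, Set.mem_Icc]
    constructor
    · rintro ⟨i, rfl⟩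
      have := hU i
      have := hL i
      omega
    · rintro ⟨h1, h2⟩
      have hs : ∀ i, (parikh w n (i+1) 1 : ℤ) ≤ parikh w n i 1 + 1 ∧
          (parikh w n i 1 : ℤ) ≤ parikh w n (i+1) 1 + 1 := by
        intro i
        have h := pSum_step w i n
        rw [pSum_eq w hw, pSum_eq w hw] at h
        rcases hw i with a | a <;> rcases hw (i+n) with b | b <;> omega
      obtain ⟨l, hl⟩ := ivt_aux2 (fun i => (parikh w n i 1 : ℤ)) (fun i => (hs i).1)
        (fun i => (hs i).2) k q p (by simpa using h1) (by simpa using h2)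
      exact ⟨l, by simpa using hl⟩
  unfold abelianComplexity
  rw [← Set.ncard_image_of_injOn hinj, himg, Set.ncard_coe_finset, Nat.card_Icc]
  have := hU q
  omega
end

section
/- For every n ≥ 1, M_r(n) + m_r(n) = 0 and M_{r'}(n) + m_{r'}(n) = 0. -/
theorem even_three_mul (k : ℕ) : Even (3 * 2 ^ (k + 1)) :=
  ⟨3 * 2 ^ k, by ring⟩

/-- Prepending the bits `110` in front of a long enough binary word flips the sign. -/
theorem r_shift (r : ℕ → ℤ)
    (hre : ∀ n, r (2 * n) = r n)
    (hro : ∀ n, r (2 * n + 1) = (-1) ^ n * r n) (k : ℕ) :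
    ∀ j, j < 2 ^ k → r (3 * 2 ^ (k + 1) + j) = - r j := by
  induction k with
  | zero =>
    intro j hj
    obtain rfl : j = 0 := by simpa using hj
    have h1 := hro 0
    have h3 := hro 1
    have h6 := hre 3
    norm_num at h1 h3 h6 ⊢
    rw [h6, h3, h1]
  | succ k ih =>
    intro j hj
    rw [pow_succ] at hj
    obtain ⟨i, rfl | rfl⟩ := Nat.even_or_odd' j
    · have e : 3 * 2 ^ (k + 1 + 1) + 2 * i = 2 * (3 * 2 ^ (k + 1) + i) := by ring
      rw [e, hre, hre, ih i (by omega)]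
    · have e : 3 * 2 ^ (k + 1 + 1) + (2 * i + 1) = 2 * (3 * 2 ^ (k + 1) + i) + 1 := by ring
      rw [e, hro, hro, ih i (by omega), pow_add, Even.neg_one_pow (even_three_mul k)]
      ring

theorem add_eq_zero_of_neg_shift (w : ℕ → ℤ) (n : ℕ)
    (h : ∀ i, ∃ i', ∀ j, j < n → w (i' + j) = - w (i + j)) {M m : ℤ}
    (hM : IsGreatest (Set.range fun i => pSum w i n) M)
    (hm : IsLeast (Set.range fun i => pSum w i n) m) : M + m = 0 := by
  have h' : ∀ i, ∃ i', pSum w i' n = - pSum w i n := by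
    intro i
    obtain ⟨i', hi⟩ := h i
    refine ⟨i', ?_⟩
    unfold pSum
    rw [← Finset.sum_neg_distrib]
    exact Finset.sum_congr rfl fun j hj => hi j (Finset.mem_range.1 hj)
  obtain ⟨⟨a, ha⟩, hMu⟩ := hM
  obtain ⟨⟨b, hb⟩, hml⟩ := hm
  obtain ⟨a', ha'⟩ := h' a
  obtain ⟨b', hb'⟩ := h' b
  have h1 := hml ⟨a', rfl⟩
  have h2 := hMu ⟨b', rfl⟩
  simp only at ha hb h1 h2
  omega

/-- For the Rudin–Shapiro sequence `r` (defined by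
`r(0) = 1`, `r(2n) = r(n)`, `r(2n+1) = (−1)^n r(n)`) and the related sequence
`r'(n) = (−1)^n r(n)`, one has `M_r(n) + m_r(n) = 0` and
`M_{r'}(n) + m_{r'}(n) = 0` for all `n ≥ 1`, where `M_w(n)` and `m_w(n)` are
the maximal and minimal sums of `n` consecutive terms of `w`. -/
theorem max_add_min_eq_zero
    (r : ℕ → ℤ) (hr0 : r 0 = 1)
    (hre : ∀ n, r (2 * n) = r n)
    (hro : ∀ n, r (2 * n + 1) = (-1) ^ n * r n)
    (M m M' m' : ℕ → ℤ)
    (hM : ∀ n, IsGreatest (Set.range fun i => pSum r i n) (M n))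
    (hm : ∀ n, IsLeast (Set.range fun i => pSum r i n) (m n))
    (hM' : ∀ n, IsGreatest (Set.range fun i => pSum (fun k => (-1) ^ k * r k) i n) (M' n))
    (hm' : ∀ n, IsLeast (Set.range fun i => pSum (fun k => (-1) ^ k * r k) i n) (m' n))
    (n : ℕ) (hn : 1 ≤ n) :
    M n + m n = 0 ∧ M' n + m' n = 0 := by
  have hs : ∀ i, ∃ k, i + n < 2 ^ k := fun i => ⟨i + n, Nat.lt_two_pow_self⟩
  constructor
  · refine add_eq_zero_of_neg_shift r n (fun i => ?_) (hM n) (hm n)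
    obtain ⟨k, hk⟩ := hs i
    refine ⟨3 * 2 ^ (k + 1) + i, fun j hj => ?_⟩
    rw [add_assoc]
    exact r_shift r hre hro k (i + j) (by omega)
  · refine add_eq_zero_of_neg_shift _ n (fun i => ?_) (hM' n) (hm' n)
    obtain ⟨k, hk⟩ := hs i
    refine ⟨3 * 2 ^ (k + 1) + i, fun j hj => ?_⟩
    rw [add_assoc, r_shift r hre hro k (i + j) (by omega), pow_add,
      Even.neg_one_pow (even_three_mul k)]
    ring
end

section
/- For every n ≥ 1, the abelian complexity of the Rudin-Shapiro sequence satisfies ρ_r(n) = M_r(n) + 1, and likewise ρ_{r'}(n) = M_{r'}(n) + 1 for the related sequence r'. -/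
theorem ivt_up (f : ℕ → ℤ) (h : ∀ i, f (i + 1) ≤ f i + 1) (i : ℕ) (v : ℤ) (hi : f i ≤ v)
    (d : ℕ) (hv : v ≤ f (i + d)) : ∃ k, f k = v := by
  induction d with
  | zero => exact ⟨i, le_antisymm hi hv⟩
  | succ d ih =>
    by_cases hd : v ≤ f (i + d)
    · exact ih hd
    · have := h (i + d)
      exact ⟨i + (d + 1), by rw [← add_assoc] at *; omega⟩

theorem ivt_all (f : ℕ → ℤ) (h : ∀ i, f (i + 1) ≤ f i + 1) (h' : ∀ i, f i ≤ f (i + 1) + 1)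
    (i j : ℕ) (v : ℤ) (hi : f i ≤ v) (hj : v ≤ f j) : ∃ k, f k = v := by
  rcases le_total i j with hij | hij
  · obtain ⟨d, rfl⟩ := Nat.exists_eq_add_of_le hij
    exact ivt_up f h i v hi d hj
  · obtain ⟨d, rfl⟩ := Nat.exists_eq_add_of_le hij
    obtain ⟨k, hk⟩ := ivt_up (fun i => - f i) (fun i => by have := h' i; omega) j (-v)
      (by simpa using hj) d (by simpa using hi)
    exact ⟨k, by simpa using hk⟩

theorem parikh_sum (w : ℕ → ℤ) (n i : ℕ) (a : ℤ) :
    parikh w n i a = ∑ j ∈ Finset.range n, if w (i + j) = a then 1 else 0 := by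
  simp [parikh]

theorem parikh_step (w : ℕ → ℤ) (n i : ℕ) (a : ℤ) :
    parikh w n (i + 1) a + (if w i = a then 1 else 0)
      = parikh w n i a + (if w (i + n) = a then 1 else 0) := by
  rw [parikh_sum, parikh_sum, ← Finset.sum_range_succ (fun j => if w (i + j) = a then 1 else 0),
    Finset.sum_range_succ']
  simp only [add_zero, add_assoc, add_comm 1]

theorem parikh_total (w : ℕ → ℤ) (hw : ∀ k, w k = 1 ∨ w k = -1) (n i : ℕ) :
    parikh w n i 1 + parikh w n i (-1) = n := by
  rw [parikh_sum, parikh_sum, ← Finset.sum_add_distrib]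
  rw [Finset.sum_congr rfl (g := fun _ => 1)]
  · simp
  · intro j _
    rcases hw (i + j) with h | h <;> simp [h]

theorem pSum_parikh (w : ℕ → ℤ) (hw : ∀ k, w k = 1 ∨ w k = -1) (n i : ℕ) :
    pSum w i n = (parikh w n i 1 : ℤ) - parikh w n i (-1) := by
  rw [parikh_sum, parikh_sum, pSum]
  push_cast
  rw [← Finset.sum_sub_distrib]
  refine Finset.sum_congr rfl fun j _ => ?_
  rcases hw (i + j) with h | h <;> simp [h]

theorem parikh_other (w : ℕ → ℤ) (hw : ∀ k, w k = 1 ∨ w k = -1) (n i : ℕ) (a : ℤ)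
    (h1 : a ≠ 1) (h2 : a ≠ -1) : parikh w n i a = 0 := by
  rw [parikh_sum]
  refine Finset.sum_eq_zero fun j _ => ?_
  rcases hw (i + j) with h | h <;> simp [h, h1.symm, h2.symm]

theorem general (w : ℕ → ℤ) (hw : ∀ k, w k = 1 ∨ w k = -1)
    (n : ℕ) (hs : ∀ i, ∃ i', pSum w i' n = - pSum w i n) (M : ℤ)
    (hM : IsGreatest (Set.range fun i => pSum w i n) M) :
    (abelianComplexity w n : ℤ) = M + 1 := by
  obtain ⟨⟨i0, hi0⟩, hub⟩ := hM
  have hub : ∀ i, pSum w i n ≤ M := fun i => hub ⟨i, rfl⟩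
  simp only at hi0
  obtain ⟨i1, hi1⟩ := hs i0
  have e := pSum_parikh w hw n
  have t := parikh_total w hw n
  let F : ℕ → ℤ → ℕ := fun c a => if a = 1 then c else if a = -1 then n - c else 0
  have hF : Function.Injective F := fun c d h => by
    have := congrFun h 1
    simpa [F] using this
  have hp : ∀ i, parikh w n i = F (parikh w n i 1) := fun i => by
    funext a
    by_cases h1 : a = 1
    · simp [F, h1]
    by_cases h2 : a = -1
    · have := t i
      simp only [F, h2]
      norm_num
      omega
    · simp [F, h1, h2, parikh_other w hw n i a h1 h2]
  set b := parikh w n i0 1 with hb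
  have key : Set.range (parikh w n) = F '' (Finset.Icc (n - b) b : Finset ℕ) := by
    ext P
    simp only [Set.mem_range, Set.mem_image, Finset.coe_Icc, Set.mem_Icc]
    constructor
    · rintro ⟨i, rfl⟩
      refine ⟨parikh w n i 1, ?_, (hp i).symm⟩
      obtain ⟨i', hi'⟩ := hs i
      have := hub i
      have := hub i'
      have := e i
      have := e i0
      have := t i
      have := t i0
      omega
    · rintro ⟨c, ⟨hc1, hc2⟩, rfl⟩
      obtain ⟨k, hk⟩ := ivt_all (fun i => (parikh w n i 1 : ℤ))
        (fun i => by
          have := parikh_step w n i 1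
          split_ifs at this <;> omega)
        (fun i => by
          have := parikh_step w n i 1
          split_ifs at this <;> omega) i1 i0 c
        (by
          have := e i0
          have := e i1
          have := t i0
          have := t i1
          omega) (by omega)
      refine ⟨k, ?_⟩
      rw [hp k]
      congr 1
      exact_mod_cast hk
  rw [abelianComplexity, key, Set.ncard_image_of_injective _ hF, Set.ncard_coe_finset,
    Nat.card_Icc]
  have := hub i1
  have := e i0
  have := t i0
  omega

theorem rs_pm (r : ℕ → ℤ) (hr0 : r 0 = 1)
    (hre : ∀ n, r (2 * n) = r n)
    (hro : ∀ n, r (2 * n + 1) = (-1) ^ n * r n) (k : ℕ) : r k = 1 ∨ r k = -1 := by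
  induction k using Nat.strong_induction_on with
  | _ k ih =>
    rcases Nat.even_or_odd' k with ⟨m, rfl | rfl⟩
    · rcases Nat.eq_zero_or_pos m with rfl | hm
      · left; simpa using hr0
      · rw [hre]; exact ih m (by omega)
    · rw [hro]
      rcases neg_one_pow_eq_or ℤ m with h | h <;> rcases ih m (by omega) with h' | h' <;>
        simp [h, h']

theorem rs_shift (r : ℕ → ℤ) (hr0 : r 0 = 1)
    (hre : ∀ n, r (2 * n) = r n)
    (hro : ∀ n, r (2 * n + 1) = (-1) ^ n * r n) (k : ℕ) :
    ∀ m < 2 ^ k, r (m + 2 * (3 * 2 ^ k)) = - r m := by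
  induction k with
  | zero =>
    intro m hm
    obtain rfl : m = 0 := by simpa using hm
    have h1 := hro 0
    have h3 := hro 1
    have h6 := hre 3
    norm_num at *
    rw [h6, h3, h1]
  | succ k ih =>
    intro m hm
    rw [pow_succ] at hm
    rcases Nat.even_or_odd' m with ⟨m, rfl | rfl⟩
    · rw [hre, ← ih m (by omega), ← hre (m + _)]
      congr 1; ring
    · have : 2 * m + 1 + 2 * (3 * 2 ^ (k + 1)) = 2 * (m + 2 * (3 * 2 ^ k)) + 1 := by ring
      rw [this, hro, hro, ih m (by omega), pow_add, pow_mul (-1 : ℤ) 2]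
      simp

/-- For the Rudin–Shapiro sequence `r` and the related
sequence `r'(n) = (−1)^n r(n)`, the abelian complexities satisfy
`ρ_r(n) = M_r(n) + 1` and `ρ_{r'}(n) = M_{r'}(n) + 1` for all `n ≥ 1`. -/
theorem abelianComplexity_eq_max_add_one
    (r : ℕ → ℤ) (hr0 : r 0 = 1)
    (hre : ∀ n, r (2 * n) = r n)
    (hro : ∀ n, r (2 * n + 1) = (-1) ^ n * r n)
    (M M' : ℕ → ℤ)
    (hM : ∀ n, IsGreatest (Set.range fun i => pSum r i n) (M n))
    (hM' : ∀ n, IsGreatest (Set.range fun i => pSum (fun k => (-1) ^ k * r k) i n) (M' n))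
    (n : ℕ) (hn : 1 ≤ n) :
    (abelianComplexity r n : ℤ) = M n + 1 ∧
    (abelianComplexity (fun k => (-1) ^ k * r k) n : ℤ) = M' n + 1 := by
  have pm := rs_pm r hr0 hre hro
  have sh := rs_shift r hr0 hre hro
  have lt : ∀ i j, j ∈ Finset.range n → i + j < 2 ^ (i + n) := fun i j hj =>
    lt_trans (by have := Finset.mem_range.1 hj; omega) Nat.lt_two_pow_self
  constructor
  · refine general r pm n (fun i => ⟨i + 2 * (3 * 2 ^ (i + n)), ?_⟩) _ (hM n)
    rw [pSum, pSum, ← Finset.sum_neg_distrib]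
    refine Finset.sum_congr rfl fun j hj => ?_
    rw [add_right_comm, sh _ _ (lt i j hj)]
  · refine general _ (fun k => ?_) n (fun i => ⟨i + 2 * (3 * 2 ^ (i + n)), ?_⟩) _ (hM' n)
    · rcases neg_one_pow_eq_or ℤ k with h | h <;> rcases pm k with h' | h' <;> simp [h, h']
    rw [pSum, pSum, ← Finset.sum_neg_distrib]
    refine Finset.sum_congr rfl fun j hj => ?_
    rw [add_right_comm, sh _ _ (lt i j hj), pow_add _ (i + j), pow_mul (-1 : ℤ) 2]
    simp
end

section
/- For all n ≥ 1 and i ≥ 0, the partial sums Σ(i, n) := Σ_r(i, n) of the Rudin-Shapiro sequence satisfy: Σ(4i, 4n) = 2Σ(i, n); Σ(4i+1, 4n) = Σ(i, n) + Σ(i+1, n); Σ(4i+2, 4n) = 2Σ(i+1, n); Σ(4i+3, 4n) = 2Σ(i+1, n) − r(4i+4n+3) + r(4i+3); Σ(4i, 4n+1) = 2Σ(i, n) + r(i+n); Σ(4i+1, 4n+1) = 2Σ(i+1, n) + r(i); Σ(4i+2, 4n+1) = 2Σ(i+1, n) + r(4i+4n+2); Σ(4i+3, 4n+1) = 2Σ(i+1,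 n) + r(4i+3). -/
theorem pSum_shift (w : ℕ → ℤ) (i n : ℕ) :
    pSum w (i + 1) n = pSum w i n - w i + w (i + n) := by
  have h1 := Finset.sum_range_succ (fun j => w (i + j)) n
  have h2 := Finset.sum_range_succ' (fun j => w (i + j)) n
  have h3 : pSum w (i + 1) n = ∑ j ∈ Finset.range n, w (i + (j + 1)) := by
    unfold pSum
    refine Finset.sum_congr rfl fun j _ => ?_
    congr 1
    omega
  rw [h3]
  unfold pSum
  simp only [Nat.add_zero] at h1 h2
  linarith

theorem pSum_snoc (w : ℕ → ℤ) (i n : ℕ) :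
    pSum w i (n + 1) = pSum w i n + w (i + n) :=
  Finset.sum_range_succ _ _

/-- Recurrence relations for the partial sums
`Σ(i, n) = Σ_r(i, n)` of the Rudin–Shapiro sequence (first eight cases:
lengths `4n` and `4n+1`). -/
theorem pSum_rudinShapiro_four_n_and_four_n_add_one
    (r : ℕ → ℤ) (hr0 : r 0 = 1)
    (hre : ∀ n, r (2 * n) = r n)
    (hro : ∀ n, r (2 * n + 1) = (-1) ^ n * r n)
    (n i : ℕ) (hn : 1 ≤ n) :
    pSum r (4 * i) (4 * n) = 2 * pSum r i n ∧
    pSum r (4 * i + 1) (4 * n) = pSum r i n + pSum r (i + 1) n ∧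
    pSum r (4 * i + 2) (4 * n) = 2 * pSum r (i + 1) n ∧
    pSum r (4 * i + 3) (4 * n) =
      2 * pSum r (i + 1) n - r (4 * i + 4 * n + 3) + r (4 * i + 3) ∧
    pSum r (4 * i) (4 * n + 1) = 2 * pSum r i n + r (i + n) ∧
    pSum r (4 * i + 1) (4 * n + 1) = 2 * pSum r (i + 1) n + r i ∧
    pSum r (4 * i + 2) (4 * n + 1) = 2 * pSum r (i + 1) n + r (4 * i + 4 * n + 2) ∧
    pSum r (4 * i + 3) (4 * n + 1) = 2 * pSum r (i + 1) n + r (4 * i + 3) := by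
  have e0 : ∀ m, r (4 * m) = r m := fun m => by
    rw [show 4 * m = 2 * (2 * m) by ring, hre, hre]
  have e1 : ∀ m, r (4 * m + 1) = r m := fun m => by
    rw [show 4 * m + 1 = 2 * (2 * m) + 1 by ring, hro, hre, pow_mul]
    simp
  have e3 : ∀ m, r (4 * m + 3) = - r (4 * m + 2) := fun m => by
    rw [show 4 * m + 3 = 2 * (2 * m + 1) + 1 by ring, hro,
      show 4 * m + 2 = 2 * (2 * m + 1) by ring, hre, pow_succ, pow_mul]
    simp
  have a0 : ∀ m, pSum r (4 * i) (4 * m) = 2 * pSum r i m := fun m => by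
    induction m with
    | zero => simp [pSum]
    | succ k ih =>
      rw [show 4 * (k + 1) = 4 * k + 1 + 1 + 1 + 1 by ring]
      simp only [pSum_snoc, ih]
      rw [show 4 * i + 4 * k = 4 * (i + k) by ring,
        show 4 * i + (4 * k + 1) = 4 * (i + k) + 1 by ring,
        show 4 * i + (4 * k + 1 + 1) = 4 * (i + k) + 2 by ring,
        show 4 * i + (4 * k + 1 + 1 + 1) = 4 * (i + k) + 3 by ring, e0, e1, e3]
      ring
  have b0 := a0 n
  have s := pSum_shift r i n
  have s1 := pSum_shift r (4 * i) (4 * n)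
  have s2 := pSum_shift r (4 * i + 1) (4 * n)
  have s3 := pSum_shift r (4 * i + 2) (4 * n)
  simp only [pSum_snoc]
  rw [show 4 * i + 4 * n = 4 * (i + n) by ring] at *
  rw [show 4 * i + 1 + 4 * n = 4 * (i + n) + 1 by ring] at *
  rw [show 4 * i + 2 + 4 * n = 4 * (i + n) + 2 by ring] at *
  rw [show 4 * i + 3 + 4 * n = 4 * (i + n) + 3 by ring] at *
  have f0 := e0 i
  have f1 := e1 i
  have f3 := e3 i
  have g0 := e0 (i + n)
  have g1 := e1 (i + n)
  have g3 := e3 (i + n)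
  refine ⟨?_, ?_, ?_, ?_, ?_, ?_, ?_, ?_⟩ <;> linarith
end

section
/- For all n ≥ 1 and i ≥ 0, the partial sums Σ(i, n) := Σ_r(i, n) of the Rudin-Shapiro sequence satisfy: Σ(4i, 4n+2) = Σ(i, n) + Σ(i, n+1) + r(i+n); Σ(4i+1, 4n+2) = Σ(i+1, n) + Σ(i, n+1) + r(4i+4n+2); Σ(4i+2, 4n+2) = Σ(i+1, n) + Σ(i+1, n+1) − r(i+n+1); Σ(4i+3, 4n+2) = Σ(i+1, n) + Σ(i+1, n+1) + r(4i+3); Σ(4i, 4n+3) = 2Σ(i, n+1) − r(4i+4n+3); Σ(4i+1, 4n+3) = 2Σ(i, n+1) − r(i); Σ(4i+2, 4n+3) = 2Σ(i+1, n+1) − r(i+n+1); Σ(4i+3, 4n+3) = 2Σ(i+1, n+1) + r(4i+3). -/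
/-- Recurrence relations for the partial sums
`Σ(i, n) = Σ_r(i, n)` of the Rudin–Shapiro sequence (last eight cases:
lengths `4n+2` and `4n+3`). -/
theorem pSum_rudinShapiro_four_n_add_two_and_three
    (r : ℕ → ℤ) (hr0 : r 0 = 1)
    (hre : ∀ n, r (2 * n) = r n)
    (hro : ∀ n, r (2 * n + 1) = (-1) ^ n * r n)
    (n i : ℕ) (hn : 1 ≤ n) :
    pSum r (4 * i) (4 * n + 2) = pSum r i n + pSum r i (n + 1) + r (i + n) ∧
    pSum r (4 * i + 1) (4 * n + 2) =
      pSum r (i + 1) n + pSum r i (n + 1) + r (4 * i + 4 * n + 2) ∧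
    pSum r (4 * i + 2) (4 * n + 2) =
      pSum r (i + 1) n + pSum r (i + 1) (n + 1) - r (i + n + 1) ∧
    pSum r (4 * i + 3) (4 * n + 2) =
      pSum r (i + 1) n + pSum r (i + 1) (n + 1) + r (4 * i + 3) ∧
    pSum r (4 * i) (4 * n + 3) = 2 * pSum r i (n + 1) - r (4 * i + 4 * n + 3) ∧
    pSum r (4 * i + 1) (4 * n + 3) = 2 * pSum r i (n + 1) - r i ∧
    pSum r (4 * i + 2) (4 * n + 3) = 2 * pSum r (i + 1) (n + 1) - r (i + n + 1) ∧
    pSum r (4 * i + 3) (4 * n + 3) = 2 * pSum r (i + 1) (n + 1) + r (4 * i + 3) := by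
  have h0 : ∀ m, r (4 * m) = r m := fun m => by
    rw [show 4 * m = 2 * (2 * m) by ring, hre, hre]
  have h1 : ∀ m, r (4 * m + 1) = r m := fun m => by
    rw [show 4 * m + 1 = 2 * (2 * m) + 1 by ring, hro, hre, pow_mul]; simp
  have h3 : ∀ m, r (4 * m + 3) = - r (4 * m + 2) := fun m => by
    rw [show 4 * m + 3 = 2 * (2 * m + 1) + 1 by ring, hro,
      show 4 * m + 2 = 2 * (2 * m + 1) by ring, hre, pow_succ, pow_mul]; simp
  obtain ⟨S, hS⟩ : ∃ S : ℕ → ℤ, S = fun k => ∑ j ∈ Finset.range k, r j := ⟨_, rfl⟩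
  have hs : ∀ m, S (m + 1) = S m + r m := fun m => by
    simp only [hS, Finset.sum_range_succ]
  have hS0 : S 0 = 0 := by simp [hS]
  have hp : ∀ a m, pSum r a m = S (a + m) - S a := fun a m => by
    simp only [hS, pSum, Finset.sum_range_add]; ring
  have a1 : ∀ m, S (4 * m + 1) = S (4 * m) + r m := fun m => by rw [hs, h0]
  have a2 : ∀ m, S (4 * m + 2) = S (4 * m) + 2 * r m := fun m => by
    rw [hs (4 * m + 1), a1, h1]; ring
  have a3 : ∀ m, S (4 * m + 3) = S (4 * m) + 2 * r m + r (4 * m + 2) := fun m => by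
    rw [hs (4 * m + 2), a2]
  have a4 : ∀ m, S (4 * m) = 2 * S m := fun m => by
    induction m with
    | zero => simp [hS0]
    | succ k ih =>
      rw [show 4 * (k + 1) = 4 * k + 3 + 1 by ring, hs, a3, h3, ih, hs]; ring
  simp only [hp]
  rw [show 4 * i + (4 * n + 2) = 4 * (i + n) + 2 by ring,
    show 4 * i + 1 + (4 * n + 2) = 4 * (i + n) + 3 by ring,
    show 4 * i + 2 + (4 * n + 2) = 4 * (i + n + 1) by ring,
    show 4 * i + 3 + (4 * n + 2) = 4 * (i + n + 1) + 1 by ring,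
    show 4 * i + (4 * n + 3) = 4 * (i + n) + 3 by ring,
    show 4 * i + 1 + (4 * n + 3) = 4 * (i + n + 1) by ring,
    show 4 * i + 2 + (4 * n + 3) = 4 * (i + n + 1) + 1 by ring,
    show 4 * i + 3 + (4 * n + 3) = 4 * (i + n + 1) + 2 by ring,
    show i + (n + 1) = i + n + 1 by ring,
    show i + 1 + (n + 1) = i + n + 1 + 1 by ring,
    show i + 1 + n = i + n + 1 by ring,
    show 4 * i + 4 * n + 2 = 4 * (i + n) + 2 by ring,
    show 4 * i + 4 * n + 3 = 4 * (i + n) + 3 by ring]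
  simp only [a1, a2, a3, a4, h3, hs]
  refine ⟨?_, ?_, ?_, ?_, ?_, ?_, ?_, ?_⟩ <;> ring
end

section
/- For every n ≥ 1: M_r(4n) ≤ 2M_r(n) + 2, M_r(4n+1) ≤ 2M_r(n) + 1, M_r(4n+2) ≤ M_r(n) + M_r(n+1) + 1, and M_r(4n+3) ≤ 2M_r(n+1) + 1. Moreover, the same four inequalities hold with M_r replaced by M_{r'}. -/
/-- Core estimate, for a prefix-sum function `Q`: block pattern either `(a,a,b,-b)` or `(a,-a,b,b)`. -/
theorem core_bounds (Q c N : ℕ → ℤ) (hc : ∀ m, -1 ≤ c m ∧ c m ≤ 1)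
    (hN : ∀ i n, Q (i + n) - Q i ≤ N n)
    (hd : ∀ m, -1 ≤ Q (m + 1) - Q m ∧ Q (m + 1) - Q m ≤ 1)
    (h0 : ∀ m, Q (4 * m) = 2 * Q m)
    (h : (∀ m, Q (4 * m + 1) = Q m + Q (m + 1) ∧ Q (4 * m + 2) = 2 * Q (m + 1) ∧
            Q (4 * m + 3) = 2 * Q (m + 1) + c m) ∨
         (∀ m, Q (4 * m + 1) = 2 * Q m + c m ∧ Q (4 * m + 2) = 2 * Q m ∧
            Q (4 * m + 3) = Q m + Q (m + 1))) (n k : ℕ) :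
    Q (k + 4 * n) - Q k ≤ 2 * N n + 2 ∧
    Q (k + (4 * n + 1)) - Q k ≤ 2 * N n + 1 ∧
    Q (k + (4 * n + 2)) - Q k ≤ N n + N (n + 1) + 1 ∧
    Q (k + (4 * n + 3)) - Q k ≤ 2 * N (n + 1) + 1 := by
  obtain ⟨i, s, hs, rfl⟩ : ∃ i s, s < 4 ∧ k = 4 * i + s :=
    ⟨k / 4, k % 4, Nat.mod_lt _ (by norm_num), by omega⟩
  have n1 := hN i n
  have n2 := hN (i + 1) n
  have n3 := hN i (n + 1)
  have n4 := hN (i + 1) (n + 1)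
  rw [show i + 1 + n = i + n + 1 by ring] at n2
  rw [show i + (n + 1) = i + n + 1 by ring] at n3
  rw [show i + 1 + (n + 1) = i + n + 1 + 1 by ring] at n4
  have d1 := hd i
  have d2 := hd (i + n)
  have d3 := hd (i + n + 1)
  have c1 := hc i
  have c2 := hc (i + n)
  have c3 := hc (i + n + 1)
  have z1 := h0 i
  have z2 := h0 (i + n)
  have z3 := h0 (i + n + 1)
  have e (s t : ℕ) : 4 * i + s + (4 * n + t) = 4 * (i + n) + (s + t) := by ring
  have e0 : 4 * i + s + 4 * n = 4 * (i + n) + s := by ring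
  have e4 : 4 * (i + n) + 4 = 4 * (i + n + 1) := by ring
  have e5 : 4 * (i + n) + 5 = 4 * (i + n + 1) + 1 := by ring
  have e6 : 4 * (i + n) + 6 = 4 * (i + n + 1) + 2 := by ring
  rw [e, e, e, e0]
  rcases h with h | h <;>
  · obtain ⟨a1, a2, a3⟩ := h i
    obtain ⟨b1, b2, b3⟩ := h (i + n)
    obtain ⟨f1, f2, f3⟩ := h (i + n + 1)
    interval_cases s <;> norm_num only [e4, e5, e6, add_zero] <;>
      refine ⟨?_, ?_, ?_, ?_⟩ <;> linarith [d1.1, d1.2, d2.1, d2.2, d3.1, d3.2, c1.1, c1.2,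
        c2.1, c2.2, c3.1, c3.2]

theorem pSum_prefix (w : ℕ → ℤ) (i n : ℕ) : pSum w i n = pSum w 0 (i + n) - pSum w 0 i := by
  simp [pSum, Finset.sum_range_add]

theorem prefix_succ (w : ℕ → ℤ) (n : ℕ) : pSum w 0 (n + 1) = pSum w 0 n + w n := by
  simp [pSum, Finset.sum_range_succ]

theorem seq_bounds (w c N : ℕ → ℤ) (hc : ∀ m, -1 ≤ c m ∧ c m ≤ 1)
    (hw : ∀ m, -1 ≤ w m ∧ w m ≤ 1)
    (hN : ∀ n, IsGreatest (Set.range fun i => pSum w i n) (N n))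
    (h : (∀ m, w (4 * m) = w m ∧ w (4 * m + 1) = w m ∧ w (4 * m + 2) = c m ∧
            w (4 * m + 3) = - c m) ∨
         (∀ m, w (4 * m) = c m ∧ w (4 * m + 1) = - c m ∧ w (4 * m + 2) = w m ∧
            w (4 * m + 3) = w m)) (n : ℕ) :
    N (4 * n) ≤ 2 * N n + 2 ∧ N (4 * n + 1) ≤ 2 * N n + 1 ∧
    N (4 * n + 2) ≤ N n + N (n + 1) + 1 ∧ N (4 * n + 3) ≤ 2 * N (n + 1) + 1 := by
  have s := prefix_succ w
  have h0 : ∀ m, pSum w 0 (4 * m) = 2 * pSum w 0 m := by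
    intro m
    induction m with
    | zero => simp [pSum]
    | succ m ih =>
      rw [show 4 * (m + 1) = 4 * m + 3 + 1 by ring, s, s (4 * m + 2), s (4 * m + 1), s (4 * m), s m]
      rcases h with h | h <;> obtain ⟨a, b, c, d⟩ := h m <;> linarith
  have key := core_bounds (pSum w 0) c N hc
    (fun i n => by rw [← pSum_prefix]; exact (hN n).2 ⟨i, rfl⟩)
    (fun m => by have := hw m; rw [s]; constructor <;> linarith [this.1, this.2]) h0
    (by
      rcases h with h | h
      · left; intro m
        obtain ⟨a, b, c, d⟩ := h m
        rw [s (4 * m + 2), s (4 * m + 1), s (4 * m), s m, h0]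
        refine ⟨?_, ?_, ?_⟩ <;> linarith
      · right; intro m
        obtain ⟨a, b, c, d⟩ := h m
        rw [s (4 * m + 2), s (4 * m + 1), s (4 * m), s m, h0]
        refine ⟨?_, ?_, ?_⟩ <;> linarith) n
  simp only [← pSum_prefix] at key
  refine ⟨?_, ?_, ?_, ?_⟩
  · obtain ⟨k, hk⟩ := (hN (4 * n)).1
    rw [← hk]; exact (key k).1
  · obtain ⟨k, hk⟩ := (hN (4 * n + 1)).1
    rw [← hk]; exact (key k).2.1
  · obtain ⟨k, hk⟩ := (hN (4 * n + 2)).1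
    rw [← hk]; exact (key k).2.2.1
  · obtain ⟨k, hk⟩ := (hN (4 * n + 3)).1
    rw [← hk]; exact (key k).2.2.2

/-- **Statement.** Bounds for the maximal sums of consecutive terms of the
Rudin–Shapiro sequence `r` and of the related sequence `r'(n) = (−1)^n r(n)`. -/
theorem max_sum_upper_bounds
    (r : ℕ → ℤ) (hr0 : r 0 = 1)
    (hre : ∀ n, r (2 * n) = r n)
    (hro : ∀ n, r (2 * n + 1) = (-1) ^ n * r n)
    (M M' : ℕ → ℤ)
    (hM : ∀ n, IsGreatest (Set.range fun i => pSum r i n) (M n))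
    (hM' : ∀ n, IsGreatest (Set.range fun i => pSum (fun k => (-1) ^ k * r k) i n) (M' n))
    (n : ℕ) (hn : 1 ≤ n) :
    (M (4 * n) ≤ 2 * M n + 2 ∧
     M (4 * n + 1) ≤ 2 * M n + 1 ∧
     M (4 * n + 2) ≤ M n + M (n + 1) + 1 ∧
     M (4 * n + 3) ≤ 2 * M (n + 1) + 1) ∧
    (M' (4 * n) ≤ 2 * M' n + 2 ∧
     M' (4 * n + 1) ≤ 2 * M' n + 1 ∧
     M' (4 * n + 2) ≤ M' n + M' (n + 1) + 1 ∧
     M' (4 * n + 3) ≤ 2 * M' (n + 1) + 1) := by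
  have hr : ∀ m, r m = 1 ∨ r m = -1 := by
    intro m
    induction m using Nat.strong_induction_on with
    | _ m ih =>
      rcases Nat.eq_zero_or_pos m with rfl | hm
      · exact Or.inl hr0
      · rcases Nat.even_or_odd' m with ⟨k, rfl | rfl⟩
        · rw [hre]; exact ih k (by omega)
        · rw [hro]
          rcases neg_one_pow_eq_or ℤ k with h | h <;> rcases ih k (by omega) with h' | h' <;>
            simp [h, h']
  have hw : ∀ m, -1 ≤ r m ∧ r m ≤ 1 := by
    intro m
    rcases hr m with h | h <;> simp [h]
  have hw' : ∀ m, -1 ≤ (-1) ^ m * r m ∧ (-1) ^ m * r m ≤ 1 := by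
    intro m
    rcases neg_one_pow_eq_or ℤ m with h | h <;> rcases hr m with h' | h' <;> simp [h, h']
  have q0 : ∀ m, r (4 * m) = r m := fun m => by
    rw [show 4 * m = 2 * (2 * m) by ring, hre, hre]
  have q1 : ∀ m, r (4 * m + 1) = r m := fun m => by
    rw [show 4 * m + 1 = 2 * (2 * m) + 1 by ring, hro, hre, pow_mul]; simp
  have q2 : ∀ m, r (4 * m + 2) = (-1) ^ m * r m := fun m => by
    rw [show 4 * m + 2 = 2 * (2 * m + 1) by ring, hre, hro]
  have q3 : ∀ m, r (4 * m + 3) = -((-1) ^ m * r m) := fun m => by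
    rw [show 4 * m + 3 = 2 * (2 * m + 1) + 1 by ring, hro, hro, pow_succ, pow_mul]; simp
  have p4 : ∀ m : ℕ, (-1 : ℤ) ^ (4 * m) = 1 := fun m => by rw [pow_mul]; norm_num
  refine ⟨seq_bounds r (fun m => (-1) ^ m * r m) M hw' hw hM
    (Or.inl fun m => ⟨q0 m, q1 m, q2 m, q3 m⟩) n,
    seq_bounds (fun k => (-1) ^ k * r k) r M' hw hw' hM' (Or.inr fun m => ?_) n⟩
  simp only [q0, q1, q2, q3, pow_add, p4]
  refine ⟨?_, ?_, ?_, ?_⟩ <;> ring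
end

section
/- For every n ≥ 1, M_r(n) = M_{r'}(n); denote this common value by M(n). Moreover M(1) = 1, M(2) = 2, M(3) = 3, and for every n ≥ 1: M(4n) = 2M(n) + 2, M(4n+1) = 2M(n) + 1, M(4n+2) = M(n) + M(n+1) + 1, and M(4n+3) = 2M(n+1) + 1. -/
/-- The sequences `r`, `s = r'`, the prefix sums `P` and the maxima `M`, with the facts used. -/
structure RSData (r s P M : ℕ → ℤ) : Prop where
  r0 : ∀ k, r (4 * k) = r k
  r1 : ∀ k, r (4 * k + 1) = r k
  r2 : ∀ k, r (4 * k + 2) = s k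
  r3 : ∀ k, r (4 * k + 3) = - s k
  s0 : ∀ k, s (4 * k) = r k
  s1 : ∀ k, s (4 * k + 1) = - r k
  s2 : ∀ k, s (4 * k + 2) = s k
  s3 : ∀ k, s (4 * k + 3) = s k
  rv : ∀ k, r k = 1 ∨ r k = -1
  sv : ∀ k, s k = 1 ∨ s k = -1
  rz : r 0 = 1
  sz : s 0 = 1
  P0 : P 0 = 0
  Ps : ∀ k, P (k + 1) = P k + r k
  Mb : ∀ n i, P (i + n) - P i ≤ M n
  Ma : ∀ n, ∃ i, P (i + n) - P i = M n

/-- There is a maximal window of length `n` with prescribed `s`-values at its two ends. -/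
def RSA (s P M : ℕ → ℤ) (n : ℕ) : Prop :=
  ∃ i, P (i + 1 + n) - P (i + 1) = M n ∧ s i = -1 ∧ s (i + n) = 1

/-- Maximal windows of length `n` and `n + 1` are nested, with a boundary condition. -/
def RSB (r s P M : ℕ → ℤ) (n : ℕ) : Prop :=
  (M (n + 1) = M n + 1 ∧
    ∃ i, P (i + 1 + n) - P (i + 1) = M n ∧ r (i + 1 + n) = 1 ∧ s i = -1) ∨
  (M (n + 1) = M n - 1 ∧
    ∃ i, P (i + 1 + n) - P (i + 1) = M n ∧ r i = -1 ∧ s (i + n) = 1)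

namespace RSData

variable {r s P M : ℕ → ℤ}

theorem p0 (h : RSData r s P M) (k : ℕ) : P (4 * k) = 2 * P k := by
  induction k with
  | zero => simp [h.P0]
  | succ k ih =>
    have e1 := h.Ps (4 * k)
    have e2 := h.Ps (4 * k + 1)
    have e3 := h.Ps (4 * k + 2)
    have e4 := h.Ps (4 * k + 3)
    have e5 := h.Ps k
    have := h.r0 k
    have := h.r1 k
    have := h.r2 k
    have := h.r3 k
    rw [show 4 * (k + 1) = 4 * k + 3 + 1 by ring]
    linarith

theorem p1 (h : RSData r s P M) (k : ℕ) : P (4 * k + 1) = 2 * P k + r k := by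
  rw [h.Ps, h.p0, h.r0]

theorem p2 (h : RSData r s P M) (k : ℕ) : P (4 * k + 2) = 2 * P k + 2 * r k := by
  rw [h.Ps, h.p1, h.r1]; ring

theorem p3 (h : RSData r s P M) (k : ℕ) : P (4 * k + 3) = 2 * P k + 2 * r k + s k := by
  rw [h.Ps, h.p2, h.r2]

theorem mono (h : RSData r s P M) (n : ℕ) : M n ≤ M (n + 1) + 1 := by
  obtain ⟨i, hi⟩ := h.Ma n
  have h1 := h.Mb (n + 1) i
  have h2 := h.Ps (i + n)
  rw [← add_assoc] at h1
  rcases h.rv (i + n) with h3 | h3 <;> linarith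


theorem ub0 (h : RSData r s P M) (n : ℕ) : M (4 * n + 0) ≤ 2 * M n + 2 := by
  obtain ⟨i, hi⟩ := h.Ma (4 * n + 0)
  obtain ⟨q, a, ha, rfl⟩ : ∃ q a, a < 4 ∧ i = 4 * q + a :=
    ⟨i / 4, i % 4, Nat.mod_lt _ (by norm_num), by omega⟩
  rw [← hi]
  have b1 := h.Mb n q
  have b2 := h.Mb n (q + 1)
  have b3 := h.Mb (n + 1) q
  have b4 := h.Mb (n + 1) (q + 1)
  have m := h.mono n
  rw [show q + 1 + n = q + n + 1 by ring] at b2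
  rw [show q + (n + 1) = q + n + 1 by ring] at b3
  rw [show q + 1 + (n + 1) = q + n + 1 + 1 by ring] at b4
  have c1 := h.Ps q
  have c2 := h.Ps (q + n)
  have c3 := h.Ps (q + n + 1)
  have v1 := h.rv q
  have v2 := h.rv (q + n)
  have v3 := h.rv (q + n + 1)
  have w1 := h.sv q
  have w2 := h.sv (q + n)
  have w3 := h.sv (q + n + 1)
  have d0 := h.p0 q
  have d1 := h.p1 q
  have d2 := h.p2 q
  have d3 := h.p3 q
  interval_cases a
  · rw [show 4 * q + 0 + (4 * n + 0) = 4 * (q + n) + 0 by ring]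
    have e := h.p0 (q + n)
    try simp only [add_zero] at *
    omega
  · rw [show 4 * q + 1 + (4 * n + 0) = 4 * (q + n) + 1 by ring]
    have e := h.p1 (q + n)
    try simp only [add_zero] at *
    omega
  · rw [show 4 * q + 2 + (4 * n + 0) = 4 * (q + n) + 2 by ring]
    have e := h.p2 (q + n)
    try simp only [add_zero] at *
    omega
  · rw [show 4 * q + 3 + (4 * n + 0) = 4 * (q + n) + 3 by ring]
    have e := h.p3 (q + n)
    try simp only [add_zero] at *
    omega

theorem ub1 (h : RSData r s P M) (n : ℕ) : M (4 * n + 1) ≤ 2 * M n + 1 := by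
  obtain ⟨i, hi⟩ := h.Ma (4 * n + 1)
  obtain ⟨q, a, ha, rfl⟩ : ∃ q a, a < 4 ∧ i = 4 * q + a :=
    ⟨i / 4, i % 4, Nat.mod_lt _ (by norm_num), by omega⟩
  rw [← hi]
  have b1 := h.Mb n q
  have b2 := h.Mb n (q + 1)
  have b3 := h.Mb (n + 1) q
  have b4 := h.Mb (n + 1) (q + 1)
  have m := h.mono n
  rw [show q + 1 + n = q + n + 1 by ring] at b2
  rw [show q + (n + 1) = q + n + 1 by ring] at b3
  rw [show q + 1 + (n + 1) = q + n + 1 + 1 by ring] at b4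
  have c1 := h.Ps q
  have c2 := h.Ps (q + n)
  have c3 := h.Ps (q + n + 1)
  have v1 := h.rv q
  have v2 := h.rv (q + n)
  have v3 := h.rv (q + n + 1)
  have w1 := h.sv q
  have w2 := h.sv (q + n)
  have w3 := h.sv (q + n + 1)
  have d0 := h.p0 q
  have d1 := h.p1 q
  have d2 := h.p2 q
  have d3 := h.p3 q
  interval_cases a
  · rw [show 4 * q + 0 + (4 * n + 1) = 4 * (q + n) + 1 by ring]
    have e := h.p1 (q + n)
    try simp only [add_zero] at *
    omega
  · rw [show 4 * q + 1 + (4 * n + 1) = 4 * (q + n) + 2 by ring]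
    have e := h.p2 (q + n)
    try simp only [add_zero] at *
    omega
  · rw [show 4 * q + 2 + (4 * n + 1) = 4 * (q + n) + 3 by ring]
    have e := h.p3 (q + n)
    try simp only [add_zero] at *
    omega
  · rw [show 4 * q + 3 + (4 * n + 1) = 4 * (q + n + 1) + 0 by ring]
    have e := h.p0 (q + n + 1)
    try simp only [add_zero] at *
    omega

theorem ub2 (h : RSData r s P M) (n : ℕ) : M (4 * n + 2) ≤ M n + M (n + 1) + 1 := by
  obtain ⟨i, hi⟩ := h.Ma (4 * n + 2)
  obtain ⟨q, a, ha, rfl⟩ : ∃ q a, a < 4 ∧ i = 4 * q + a :=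
    ⟨i / 4, i % 4, Nat.mod_lt _ (by norm_num), by omega⟩
  rw [← hi]
  have b1 := h.Mb n q
  have b2 := h.Mb n (q + 1)
  have b3 := h.Mb (n + 1) q
  have b4 := h.Mb (n + 1) (q + 1)
  have m := h.mono n
  rw [show q + 1 + n = q + n + 1 by ring] at b2
  rw [show q + (n + 1) = q + n + 1 by ring] at b3
  rw [show q + 1 + (n + 1) = q + n + 1 + 1 by ring] at b4
  have c1 := h.Ps q
  have c2 := h.Ps (q + n)
  have c3 := h.Ps (q + n + 1)
  have v1 := h.rv q
  have v2 := h.rv (q + n)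
  have v3 := h.rv (q + n + 1)
  have w1 := h.sv q
  have w2 := h.sv (q + n)
  have w3 := h.sv (q + n + 1)
  have d0 := h.p0 q
  have d1 := h.p1 q
  have d2 := h.p2 q
  have d3 := h.p3 q
  interval_cases a
  · rw [show 4 * q + 0 + (4 * n + 2) = 4 * (q + n) + 2 by ring]
    have e := h.p2 (q + n)
    try simp only [add_zero] at *
    omega
  · rw [show 4 * q + 1 + (4 * n + 2) = 4 * (q + n) + 3 by ring]
    have e := h.p3 (q + n)
    try simp only [add_zero] at *
    omega
  · rw [show 4 * q + 2 + (4 * n + 2) = 4 * (q + n + 1) + 0 by ring]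
    have e := h.p0 (q + n + 1)
    try simp only [add_zero] at *
    omega
  · rw [show 4 * q + 3 + (4 * n + 2) = 4 * (q + n + 1) + 1 by ring]
    have e := h.p1 (q + n + 1)
    try simp only [add_zero] at *
    omega

theorem ub3 (h : RSData r s P M) (n : ℕ) : M (4 * n + 3) ≤ 2 * M (n + 1) + 1 := by
  obtain ⟨i, hi⟩ := h.Ma (4 * n + 3)
  obtain ⟨q, a, ha, rfl⟩ : ∃ q a, a < 4 ∧ i = 4 * q + a :=
    ⟨i / 4, i % 4, Nat.mod_lt _ (by norm_num), by omega⟩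
  rw [← hi]
  have b1 := h.Mb n q
  have b2 := h.Mb n (q + 1)
  have b3 := h.Mb (n + 1) q
  have b4 := h.Mb (n + 1) (q + 1)
  have m := h.mono n
  rw [show q + 1 + n = q + n + 1 by ring] at b2
  rw [show q + (n + 1) = q + n + 1 by ring] at b3
  rw [show q + 1 + (n + 1) = q + n + 1 + 1 by ring] at b4
  have c1 := h.Ps q
  have c2 := h.Ps (q + n)
  have c3 := h.Ps (q + n + 1)
  have v1 := h.rv q
  have v2 := h.rv (q + n)
  have v3 := h.rv (q + n + 1)
  have w1 := h.sv q
  have w2 := h.sv (q + n)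
  have w3 := h.sv (q + n + 1)
  have d0 := h.p0 q
  have d1 := h.p1 q
  have d2 := h.p2 q
  have d3 := h.p3 q
  interval_cases a
  · rw [show 4 * q + 0 + (4 * n + 3) = 4 * (q + n) + 3 by ring]
    have e := h.p3 (q + n)
    try simp only [add_zero] at *
    omega
  · rw [show 4 * q + 1 + (4 * n + 3) = 4 * (q + n + 1) + 0 by ring]
    have e := h.p0 (q + n + 1)
    try simp only [add_zero] at *
    omega
  · rw [show 4 * q + 2 + (4 * n + 3) = 4 * (q + n + 1) + 1 by ring]
    have e := h.p1 (q + n + 1)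
    try simp only [add_zero] at *
    omega
  · rw [show 4 * q + 3 + (4 * n + 3) = 4 * (q + n + 1) + 2 by ring]
    have e := h.p2 (q + n + 1)
    try simp only [add_zero] at *
    omega


/-- The sum of the window from `4 * i + 3` to `4 * (i + 1 + n) + b - 1` etc. -/
theorem win (h : RSData r s P M) (i n : ℕ) :
    P (4 * i + 3) = 2 * P (i + 1) + s i ∧ P (4 * i + 2) = 2 * P (i + 1) ∧
    P (4 * i + 1) = 2 * P (i + 1) - r i ∧ P (4 * i + 4) = 2 * P (i + 1) ∧
    P (4 * (i + n) + 3) = 2 * P (i + 1 + n) + s (i + n) ∧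
    P (4 * (i + n) + 4) = 2 * P (i + 1 + n) ∧
    P (4 * (i + n) + 5) = 2 * P (i + 1 + n) + r (i + 1 + n) ∧
    P (4 * (i + n) + 6) = 2 * P (i + 1 + n) + 2 * r (i + 1 + n) ∧
    P (i + 1 + (n + 1)) = P (i + 1 + n) + r (i + 1 + n) := by
  have e : ∀ i, P (4 * i + 3) = 2 * P (i + 1) + s i ∧ P (4 * i + 2) = 2 * P (i + 1) ∧
    P (4 * i + 1) = 2 * P (i + 1) - r i ∧ P (4 * i + 4) = 2 * P (i + 1) ∧
    P (4 * i + 5) = 2 * P (i + 1) + r (i + 1) ∧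
    P (4 * i + 6) = 2 * P (i + 1) + 2 * r (i + 1) := by
    intro i
    have := h.p1 i
    have := h.p2 i
    have := h.p3 i
    have := h.Ps i
    have := h.p0 (i + 1)
    have := h.p1 (i + 1)
    have := h.p2 (i + 1)
    simp only [mul_add, mul_one, add_assoc, Nat.reduceAdd] at *
    refine ⟨?_, ?_, ?_, ?_, ?_, ?_⟩ <;> linarith
  obtain ⟨a1, a2, a3, a4, a5, a6⟩ := e i
  obtain ⟨b1, b2, b3, b4, b5, b6⟩ := e (i + n)
  rw [show i + 1 + n = i + n + 1 by ring]
  refine ⟨a1, a2, a3, a4, b1, b4, b5, b6, ?_⟩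
  have := h.Ps (i + n + 1)
  rw [← this]
  congr 1
  ring

theorem m0 (h : RSData r s P M) {n : ℕ} (hA : RSA s P M n) : M (4 * n) = 2 * M n + 2 := by
  obtain ⟨i, h1, h2, h3⟩ := hA
  obtain ⟨a1, a2, a3, a4, a5, a6, a7, a8, a9⟩ := h.win i n
  have u := h.ub0 n
  have l := h.Mb (4 * n) (4 * i + 3)
  rw [show 4 * i + 3 + 4 * n = 4 * (i + n) + 3 by ring] at l
  simp only [add_zero] at u
  linarith

theorem m1 (h : RSData r s P M) {n : ℕ} (hA : RSA s P M n) :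
    M (4 * n + 1) = 2 * M n + 1 := by
  obtain ⟨i, h1, h2, h3⟩ := hA
  obtain ⟨a1, a2, a3, a4, a5, a6, a7, a8, a9⟩ := h.win i n
  have u := h.ub1 n
  have l := h.Mb (4 * n + 1) (4 * i + 3)
  rw [show 4 * i + 3 + (4 * n + 1) = 4 * (i + n) + 4 by ring] at l
  linarith

theorem m3 (h : RSData r s P M) {n : ℕ} (hA : RSA s P M (n + 1)) :
    M (4 * n + 3) = 2 * M (n + 1) + 1 := by
  obtain ⟨i, h1, h2, h3⟩ := hA
  obtain ⟨a1, a2, a3, a4, a5, a6, a7, a8, a9⟩ := h.win i n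
  have u := h.ub3 n
  have l := h.Mb (4 * n + 3) (4 * i + 3)
  rw [show 4 * i + 3 + (4 * n + 3) = 4 * (i + n) + 6 by ring] at l
  linarith

theorem m2 (h : RSData r s P M) {n : ℕ} (hB : RSB r s P M n) :
    M (4 * n + 2) = M n + M (n + 1) + 1 := by
  have u := h.ub2 n
  rcases hB with ⟨hm, i, h1, h2, h3⟩ | ⟨hm, i, h1, h2, h3⟩
  · obtain ⟨a1, a2, a3, a4, a5, a6, a7, a8, a9⟩ := h.win i n
    have l := h.Mb (4 * n + 2) (4 * i + 3)
    rw [show 4 * i + 3 + (4 * n + 2) = 4 * (i + n) + 5 by ring] at l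
    linarith
  · obtain ⟨a1, a2, a3, a4, a5, a6, a7, a8, a9⟩ := h.win i n
    have l := h.Mb (4 * n + 2) (4 * i + 1)
    rw [show 4 * i + 1 + (4 * n + 2) = 4 * (i + n) + 3 by ring] at l
    linarith

theorem stepA0 (h : RSData r s P M) {n : ℕ} (hA : RSA s P M n) : RSA s P M (4 * n) := by
  have hm := h.m0 hA
  obtain ⟨i, h1, h2, h3⟩ := hA
  obtain ⟨a1, a2, a3, a4, a5, a6, a7, a8, a9⟩ := h.win i n
  refine ⟨4 * i + 2, ?_, by rw [h.s2, h2], ?_⟩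
  · rw [show 4 * i + 2 + 1 + 4 * n = 4 * (i + n) + 3 by ring]
    linarith
  · rw [show 4 * i + 2 + 4 * n = 4 * (i + n) + 2 by ring, h.s2, h3]

theorem stepA1 (h : RSData r s P M) {n : ℕ} (hA : RSA s P M n) :
    RSA s P M (4 * n + 1) := by
  have hm := h.m1 hA
  obtain ⟨i, h1, h2, h3⟩ := hA
  obtain ⟨a1, a2, a3, a4, a5, a6, a7, a8, a9⟩ := h.win i n
  refine ⟨4 * i + 2, ?_, by rw [h.s2, h2], ?_⟩
  · rw [show 4 * i + 2 + 1 + (4 * n + 1) = 4 * (i + n) + 4 by ring]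
    linarith
  · rw [show 4 * i + 2 + (4 * n + 1) = 4 * (i + n) + 3 by ring, h.s3, h3]

theorem stepA2 (h : RSData r s P M) {n : ℕ} (hB : RSB r s P M n) :
    RSA s P M (4 * n + 2) := by
  have hm := h.m2 hB
  rcases hB with ⟨hm', i, h1, h2, h3⟩ | ⟨hm', i, h1, h2, h3⟩
  · obtain ⟨a1, a2, a3, a4, a5, a6, a7, a8, a9⟩ := h.win i n
    refine ⟨4 * i + 2, ?_, by rw [h.s2, h3], ?_⟩
    · rw [show 4 * i + 2 + 1 + (4 * n + 2) = 4 * (i + n) + 5 by ring]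
      linarith
    · rw [show 4 * i + 2 + (4 * n + 2) = 4 * (i + 1 + n) by ring, h.s0, h2]
  · obtain ⟨a1, a2, a3, a4, a5, a6, a7, a8, a9⟩ := h.win i n
    refine ⟨4 * i, ?_, by rw [h.s0, h2], ?_⟩
    · rw [show 4 * i + 1 + (4 * n + 2) = 4 * (i + n) + 3 by ring]
      linarith
    · rw [show 4 * i + (4 * n + 2) = 4 * (i + n) + 2 by ring, h.s2, h3]

theorem stepA3 (h : RSData r s P M) {n : ℕ} (hA : RSA s P M (n + 1)) :
    RSA s P M (4 * n + 3) := by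
  have hm := h.m3 hA
  obtain ⟨i, h1, h2, h3⟩ := hA
  obtain ⟨a1, a2, a3, a4, a5, a6, a7, a8, a9⟩ := h.win i (n + 1)
  refine ⟨4 * i + 3, ?_, by rw [h.s3, h2], ?_⟩
  · rw [show 4 * i + 3 + 1 + (4 * n + 3) = 4 * (i + (n + 1)) + 3 by ring]
    linarith
  · rw [show 4 * i + 3 + (4 * n + 3) = 4 * (i + (n + 1)) + 2 by ring, h.s2, h3]

theorem stepB0 (h : RSData r s P M) {n : ℕ} (hA : RSA s P M n) :
    RSB r s P M (4 * n) := by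
  have hm := h.m0 hA
  have hm' := h.m1 hA
  obtain ⟨i, h1, h2, h3⟩ := hA
  obtain ⟨a1, a2, a3, a4, a5, a6, a7, a8, a9⟩ := h.win i n
  refine Or.inr ⟨by linarith, 4 * i + 2, ?_, by rw [h.r2, h2], ?_⟩
  · rw [show 4 * i + 2 + 1 + 4 * n = 4 * (i + n) + 3 by ring]
    linarith
  · rw [show 4 * i + 2 + 4 * n = 4 * (i + n) + 2 by ring, h.s2, h3]

theorem stepB1 (h : RSData r s P M) {n : ℕ} (hA : RSA s P M n) (hB : RSB r s P M n) :
    RSB r s P M (4 * n + 1) := by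
  have hm := h.m1 hA
  have hm' := h.m2 hB
  rcases hB with ⟨hm'', i, h1, h2, h3⟩ | ⟨hm'', i, h1, h2, h3⟩
  · obtain ⟨a1, a2, a3, a4, a5, a6, a7, a8, a9⟩ := h.win i n
    refine Or.inl ⟨by linarith, 4 * i + 2, ?_, ?_, by rw [h.s2, h3]⟩
    · rw [show 4 * i + 2 + 1 + (4 * n + 1) = 4 * (i + n) + 4 by ring]
      linarith
    · rw [show 4 * i + 2 + 1 + (4 * n + 1) = 4 * (i + 1 + n) by ring, h.r0, h2]
  · obtain ⟨a1, a2, a3, a4, a5, a6, a7, a8, a9⟩ := h.win i n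
    refine Or.inr ⟨by linarith, 4 * i + 1, ?_, by rw [h.r1, h2], ?_⟩
    · rw [show 4 * i + 1 + 1 + (4 * n + 1) = 4 * (i + n) + 3 by ring]
      linarith
    · rw [show 4 * i + 1 + (4 * n + 1) = 4 * (i + n) + 2 by ring, h.s2, h3]

theorem stepB2 (h : RSData r s P M) {n : ℕ} (hA : RSA s P M (n + 1))
    (hB : RSB r s P M n) : RSB r s P M (4 * n + 2) := by
  have hm := h.m3 hA
  have hm' := h.m2 hB
  rcases hB with ⟨hm'', i, h1, h2, h3⟩ | ⟨hm'', i, h1, h2, h3⟩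
  · obtain ⟨a1, a2, a3, a4, a5, a6, a7, a8, a9⟩ := h.win i n
    refine Or.inl ⟨by linarith, 4 * i + 2, ?_, ?_, by rw [h.s2, h3]⟩
    · rw [show 4 * i + 2 + 1 + (4 * n + 2) = 4 * (i + n) + 5 by ring]
      linarith
    · rw [show 4 * i + 2 + 1 + (4 * n + 2) = 4 * (i + 1 + n) + 1 by ring, h.r1, h2]
  · obtain ⟨a1, a2, a3, a4, a5, a6, a7, a8, a9⟩ := h.win i n
    refine Or.inr ⟨by linarith, 4 * i, ?_, by rw [h.r0, h2], ?_⟩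
    · rw [show 4 * i + 1 + (4 * n + 2) = 4 * (i + n) + 3 by ring]
      linarith
    · rw [show 4 * i + (4 * n + 2) = 4 * (i + n) + 2 by ring, h.s2, h3]

theorem stepB3 (h : RSData r s P M) {n : ℕ} (hA : RSA s P M (n + 1)) :
    RSB r s P M (4 * n + 3) := by
  have hm := h.m3 hA
  have hm' := h.m0 hA
  obtain ⟨i, h1, h2, h3⟩ := hA
  obtain ⟨a1, a2, a3, a4, a5, a6, a7, a8, a9⟩ := h.win i n
  refine Or.inl ⟨?_, 4 * i + 2, ?_, ?_, by rw [h.s2, h2]⟩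
  · rw [show 4 * n + 3 + 1 = 4 * (n + 1) by ring]
    linarith
  · rw [show 4 * i + 2 + 1 + (4 * n + 3) = 4 * (i + n) + 6 by ring]
    linarith
  · rw [show 4 * i + 2 + 1 + (4 * n + 3) = 4 * (i + (n + 1)) + 2 by ring, h.r2, h3]

theorem small (h : RSData r s P M) :
    M 1 = 1 ∧ M 2 = 2 ∧ M 3 = 3 ∧ RSA s P M 1 ∧ RSA s P M 2 ∧ RSA s P M 3 ∧
    RSB r s P M 1 ∧ RSB r s P M 2 ∧ RSB r s P M 3 := by
  have rz := h.rz
  have sz := h.sz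
  have r1 : r 1 = 1 := by simpa [rz] using h.r1 0
  have s1 : s 1 = -1 := by simpa [rz] using h.s1 0
  have r2 : r 2 = 1 := by simpa [sz] using h.r2 0
  have s2 : s 2 = 1 := by simpa [sz] using h.s2 0
  have s6 : s 6 = -1 := by simpa [s1] using h.s2 1
  have r7 : r 7 = 1 := by simpa [s1] using h.r3 1
  have s7 : s 7 = -1 := by simpa [s1] using h.s3 1
  have r8 : r 8 = 1 := by simpa [r2] using h.r0 2
  have s8 : s 8 = 1 := by simpa [r2] using h.s0 2
  have r9 : r 9 = 1 := by simpa [r2] using h.r1 2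
  have r10 : r 10 = 1 := by simpa [s2] using h.r2 2
  have s10 : s 10 = 1 := by simpa [s2] using h.s2 2
  have P3 : P 3 = P 2 + r 2 := h.Ps 2
  have P8 : P 8 = P 7 + r 7 := h.Ps 7
  have P9 : P 9 = P 8 + r 8 := h.Ps 8
  have P10 : P 10 = P 9 + r 9 := h.Ps 9
  have P11 : P 11 = P 10 + r 10 := h.Ps 10
  have b1 := h.Mb 1 7
  have b2 := h.Mb 2 7
  have b3 := h.Mb 3 7
  have b4 := h.Mb 4 7
  have key : ∀ n, M (n + 1) ≤ M n + 1 := by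
    intro n
    obtain ⟨i, hi⟩ := h.Ma (n + 1)
    have e1 := h.Ps (i + n)
    have e2 := h.Mb n i
    rw [← add_assoc] at hi
    rcases h.rv (i + n) with e | e <;> linarith
  have M0 : M 0 = 0 := by
    obtain ⟨i, hi⟩ := h.Ma 0
    simpa using hi.symm
  have k0 := key 0
  have k1 := key 1
  have k2 := key 2
  have k3 := key 3
  norm_num at k0 k1 k2 k3 b1 b2 b3 b4
  have m1 : M 1 = 1 := by linarith
  have m2 : M 2 = 2 := by linarith
  have m3 : M 3 = 3 := by linarith
  have m4 : M 4 = 4 := by linarith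
  refine ⟨m1, m2, m3, ⟨1, ?_, s1, s2⟩, ⟨6, ?_, s6, s8⟩, ⟨7, ?_, s7, s10⟩,
    Or.inl ⟨?_, 6, ?_, r8, s6⟩, Or.inl ⟨?_, 6, ?_, r9, s6⟩, Or.inl ⟨?_, 6, ?_, r10, s6⟩⟩ <;>
    norm_num <;> linarith

theorem all (h : RSData r s P M) (n : ℕ) (hn : 1 ≤ n) : RSA s P M n ∧ RSB r s P M n := by
  induction n using Nat.strong_induction_on with
  | _ m ih =>
    obtain ⟨_, _, _, x1, x2, x3, y1, y2, y3⟩ := h.small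
    obtain ⟨q, a, ha, rfl⟩ : ∃ q a, a < 4 ∧ m = 4 * q + a :=
      ⟨m / 4, m % 4, Nat.mod_lt _ (by norm_num), by omega⟩
    rcases Nat.eq_zero_or_pos q with rfl | hq
    · interval_cases a
      · omega
      · exact ⟨x1, y1⟩
      · exact ⟨x2, y2⟩
      · exact ⟨x3, y3⟩
    · obtain ⟨A, B⟩ := ih q (by omega) hq
      obtain ⟨A', B'⟩ := ih (q + 1) (by omega) (by omega)
      interval_cases a
      · exact ⟨h.stepA0 A, h.stepB0 A⟩
      · exact ⟨h.stepA1 A, h.stepB1 A B⟩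
      · exact ⟨h.stepA2 B, h.stepB2 A' B⟩
      · exact ⟨h.stepA3 A', h.stepB3 A'⟩

end RSData

/-- Reflection: `r (2^(k+1) - 1 - n) = (-1)^k r'(n)` for `n < 2^k`. -/
theorem rs_reflect (r : ℕ → ℤ) (hr0 : r 0 = 1)
    (hre : ∀ n, r (2 * n) = r n)
    (hro : ∀ n, r (2 * n + 1) = (-1) ^ n * r n) (k : ℕ) :
    ∀ n m, n < 2 ^ k → n + m + 1 = 2 ^ (k + 1) → r m = (-1) ^ k * ((-1) ^ n * r n) := by
  induction k with
  | zero =>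
    intro n m hn hm
    obtain rfl : n = 0 := by simpa using hn
    obtain rfl : m = 1 := by omega
    simpa [hr0] using hro 0
  | succ k ih =>
    intro n m hn hm
    rw [pow_succ] at hn hm
    obtain ⟨q, rfl | rfl⟩ := Nat.even_or_odd' n
    · obtain ⟨p, rfl⟩ : ∃ p, m = 2 * p + 1 := ⟨m / 2, by omega⟩
      have hp : q + p + 1 = 2 ^ (k + 1) := by omega
      have := ih q p (by omega) hp
      have hpar : ((-1 : ℤ)) ^ p * (-1) ^ q = -1 := by
        rw [← pow_add]
        apply Odd.neg_one_pow
        rw [pow_succ] at hp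
        exact ⟨2 ^ k - 1, by omega⟩
      rw [hro, this, hre, pow_mul, pow_succ]
      simp only [even_two, Even.neg_pow, one_pow]
      linear_combination (-1) ^ k * r q * hpar
    · obtain ⟨p, rfl⟩ : ∃ p, m = 2 * p := ⟨m / 2, by omega⟩
      have hp : q + p + 1 = 2 ^ (k + 1) := by omega
      have := ih q p (by omega) hp
      rw [hre, this, hro, pow_succ, pow_succ, pow_mul]
      simp

theorem pSum_reflect (u v : ℕ → ℤ) (i n N : ℕ) (hN : i + n ≤ N)
    (h : ∀ a b, a < i + n → a + b + 1 = N → u b = v a) :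
    pSum u (N - (i + n)) n = pSum v i n := by
  unfold pSum
  rw [← Finset.sum_range_reflect]
  apply Finset.sum_congr rfl
  intro j hj
  rw [Finset.mem_range] at hj
  apply h <;> omega

/-- For every `n ≥ 1`, `M_r(n) = M_{r'}(n)` (their common
value is denoted `M(n)`); moreover `M(1) = 1`, `M(2) = 2`, `M(3) = 3`, and
for `n ≥ 1`: `M(4n) = 2M(n) + 2`, `M(4n+1) = 2M(n) + 1`,
`M(4n+2) = M(n) + M(n+1) + 1`, `M(4n+3) = 2M(n+1) + 1`. -/
theorem max_sum_recurrences
    (r : ℕ → ℤ) (hr0 : r 0 = 1)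
    (hre : ∀ n, r (2 * n) = r n)
    (hro : ∀ n, r (2 * n + 1) = (-1) ^ n * r n)
    (M M' : ℕ → ℤ)
    (hM : ∀ n, IsGreatest (Set.range fun i => pSum r i n) (M n))
    (hM' : ∀ n, IsGreatest (Set.range fun i => pSum (fun k => (-1) ^ k * r k) i n) (M' n)) :
    (∀ n, 1 ≤ n → M n = M' n) ∧
    M 1 = 1 ∧ M 2 = 2 ∧ M 3 = 3 ∧
    (∀ n, 1 ≤ n →
      M (4 * n) = 2 * M n + 2 ∧
      M (4 * n + 1) = 2 * M n + 1 ∧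
      M (4 * n + 2) = M n + M (n + 1) + 1 ∧
      M (4 * n + 3) = 2 * M (n + 1) + 1) := by
  have h1sq : ∀ k : ℕ, ((-1 : ℤ)) ^ k * (-1) ^ k = 1 := by
    intro k
    rw [← mul_pow]
    norm_num
  have hpm : ∀ k : ℕ, ((-1 : ℤ)) ^ k = 1 ∨ ((-1 : ℤ)) ^ k = -1 := neg_one_pow_eq_or ℤ
  have r0 : ∀ k, r (4 * k) = r k := by
    intro k
    rw [show 4 * k = 2 * (2 * k) by ring, hre, hre]
  have r1 : ∀ k, r (4 * k + 1) = r k := by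
    intro k
    rw [show 4 * k + 1 = 2 * (2 * k) + 1 by ring, hro, hre, pow_mul]
    simp
  have r2 : ∀ k, r (4 * k + 2) = (-1) ^ k * r k := by
    intro k
    rw [show 4 * k + 2 = 2 * (2 * k + 1) by ring, hre, hro]
  have r3 : ∀ k, r (4 * k + 3) = - ((-1) ^ k * r k) := by
    intro k
    rw [show 4 * k + 3 = 2 * (2 * k + 1) + 1 by ring, hro, hro, pow_succ, pow_mul]
    simp
  have e4 : ∀ k, ((-1 : ℤ)) ^ (4 * k) = 1 := by
    intro k
    rw [pow_mul]
    norm_num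
  have rv : ∀ k, r k = 1 ∨ r k = -1 := by
    intro k
    induction k using Nat.strong_induction_on with
    | _ m ih =>
      obtain ⟨q, rfl | rfl⟩ := Nat.even_or_odd' m
      · rcases Nat.eq_zero_or_pos q with rfl | hq
        · left
          simpa using hr0
        · rw [hre]
          exact ih q (by omega)
      · rw [hro]
        rcases hpm q with e | e <;> rcases ih q (by omega) with e' | e' <;> simp [e, e']
  have hP : ∀ i n, pSum r i n =
      (∑ j ∈ Finset.range (i + n), r j) - ∑ j ∈ Finset.range i, r j := by
    intro i n
    rw [Finset.sum_range_add, pSum]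
    ring
  have D : RSData r (fun k => (-1) ^ k * r k) (fun k => ∑ j ∈ Finset.range k, r j) M :=
    { r0 := r0
      r1 := r1
      r2 := r2
      r3 := r3
      s0 := by
        intro k
        simp only [e4, r0, one_mul]
      s1 := by
        intro k
        simp only [pow_add, e4, r1]
        ring
      s2 := by
        intro k
        simp only [pow_add, e4, r2]
        ring
      s3 := by
        intro k
        simp only [pow_add, e4, r3]
        ring
      rv := rv
      sv := by
        intro k
        rcases hpm k with e | e <;> rcases rv k with e' | e' <;> simp [e, e']
      rz := hr0
      sz := by simp [hr0]
      P0 := by simp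
      Ps := fun k => Finset.sum_range_succ _ _
      Mb := by
        intro n i
        have := (hM n).2 ⟨i, rfl⟩
        simpa only [hP] using this
      Ma := by
        intro n
        obtain ⟨i, hi⟩ := (hM n).1
        exact ⟨i, by simpa only [hP] using hi⟩ }
  obtain ⟨m1, m2, m3, _⟩ := D.small
  refine ⟨?_, m1, m2, m3, ?_⟩
  · intro n _
    apply le_antisymm
    · obtain ⟨i, hi⟩ := (hM n).1
      have hlt : i + n < 2 ^ (2 * (i + n) + 1) :=
        lt_of_lt_of_le Nat.lt_two_pow_self (Nat.pow_le_pow_right (by norm_num) (by omega))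
      have := (hM' n).2 ⟨2 ^ (2 * (i + n) + 1 + 1) - (i + n), rfl⟩
      rw [← hi]
      refine le_trans (le_of_eq ?_) this
      symm
      apply pSum_reflect
      · rw [pow_succ]
        omega
      · intro a b ha hab
        have e := rs_reflect r hr0 hre hro (2 * (i + n) + 1) a b (by omega) hab
        have hpar : ((-1 : ℤ)) ^ b * (-1) ^ a = -1 := by
          rw [← pow_add]
          apply Odd.neg_one_pow
          rw [pow_succ] at hab
          exact ⟨2 ^ (2 * (i + n) + 1) - 1, by omega⟩
        rw [pow_succ, pow_mul] at e
        simp only [even_two, Even.neg_pow, one_pow] at e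
        simp only [e]
        linear_combination (- r a) * hpar
    · obtain ⟨i, hi⟩ := (hM' n).1
      have hlt : i + n < 2 ^ (2 * (i + n)) :=
        lt_of_lt_of_le Nat.lt_two_pow_self (Nat.pow_le_pow_right (by norm_num) (by omega))
      have := (hM n).2 ⟨2 ^ (2 * (i + n) + 1) - (i + n), rfl⟩
      rw [← hi]
      refine le_trans (le_of_eq ?_) this
      symm
      apply pSum_reflect
      · rw [pow_succ]
        omega
      · intro a b ha hab
        have e := rs_reflect r hr0 hre hro (2 * (i + n)) a b (by omega) hab
        rw [pow_mul] at e
        simpa using e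
  · intro n hn
    obtain ⟨A, B⟩ := D.all n hn
    obtain ⟨A', _⟩ := D.all (n + 1) (by omega)
    exact ⟨D.m0 A, D.m1 A, D.m2 B, D.m3 A'⟩
end

section
/- The sequence (M(n))_{n ≥ 0} of maximal sums of consecutive terms of the Rudin-Shapiro sequence is 2-regular, i.e., the ℤ-submodule of the module of all integer sequences generated by the 2-kernel {(M(2^e n + c))_{n≥0} : e ≥ 0, 0 ≤ c < 2^e} is finitely generated. -/
/-- The 2-kernel of an integer sequence `f`: the set of subsequences
`(f(2^e n + c))_{n ≥ 0}` with `e ≥ 0` and `0 ≤ c < 2^e`. -/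
def kernel2 (f : ℕ → ℤ) : Set (ℕ → ℤ) :=
  {g | ∃ e c : ℕ, c < 2 ^ e ∧ g = fun n => f (2 ^ e * n + c)}

/-- A function factoring through a finitely-valued `p` lies in the span of indicators. -/
lemma factor_mem_span {Q : Type} (q : ℕ → Q) (hfin : (Set.range q).Finite) (g : ℕ → ℕ)
    (f : ℕ → ℤ) (hf : ∀ n n', q (g n) = q (g n') → f n = f n') (G : Set (ℕ → ℤ))
    (hG : ∀ x ∈ Set.range q, (fun n => by classical exact if q (g n) = x then (1 : ℤ) else 0) ∈ G) :
    f ∈ Submodule.span ℤ G := by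
  classical
  let h : Q → ℤ := fun x => if hx : ∃ n, q (g n) = x then f hx.choose else 0
  have hh : ∀ n, h (q (g n)) = f n := by
    intro n
    have hx : ∃ m, q (g m) = q (g n) := ⟨n, rfl⟩
    simp only [h, dif_pos hx]
    exact hf _ _ hx.choose_spec
  have : f = ∑ x ∈ hfin.toFinset, h x • (fun n => if q (g n) = x then (1 : ℤ) else 0) := by
    funext n
    rw [Finset.sum_apply]
    simp only [Pi.smul_apply, smul_eq_mul, mul_ite, mul_one, mul_zero]
    rw [Finset.sum_ite_eq, if_pos, hh]
    simp
  rw [this]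
  refine Submodule.sum_mem _ fun x hx => Submodule.smul_mem _ _ (Submodule.subset_span ?_)
  have := hG x (by simpa using hx)
  convert this

lemma regular_of_automaton {Q : Type} (q : ℕ → Q) (hfin : (Set.range q).Finite) (M : ℕ → ℤ)
    (hq : ∀ m m' d, d < 4 → q m = q m' → q (4 * m + d) = q (4 * m' + d))
    (hA : ∀ m m' d, d < 4 → q m = q m' → M (4 * m + d) - 2 * M m = M (4 * m' + d) - 2 * M m') :
    (Submodule.span ℤ (kernel2 M)).FG := by
  classical
  let gs : Set (ℕ → ℕ) := {fun n => n, fun n => 2 * n, fun n => 2 * n + 1}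
  have hgs : gs.Finite := by simp [gs]
  let G : Set (ℕ → ℤ) := ((fun g : ℕ → ℕ => fun n => M (g n)) '' gs) ∪
    ((fun p : (ℕ → ℕ) × Q => fun n => if q (p.1 n) = p.2 then (1 : ℤ) else 0) ''
      (gs ×ˢ Set.range q))
  have hGfin : G.Finite := (hgs.image _).union ((hgs.prod hfin).image _)
  have hG : ∀ g ∈ gs, ∀ x ∈ Set.range q,
      (fun n => if q (g n) = x then (1 : ℤ) else 0) ∈ G := by
    intro g hg x hx
    exact Or.inr ⟨(g, x), ⟨hg, hx⟩, rfl⟩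
  have hGM : ∀ g ∈ gs, (fun n => M (g n)) ∈ Submodule.span ℤ G := by
    intro g hg
    exact Submodule.subset_span (Or.inl ⟨g, hg, rfl⟩)
  have key : ∀ e c, c < 2 ^ e → ∃ g ∈ gs,
      (∀ n n', q (g n) = q (g n') → q (2 ^ e * n + c) = q (2 ^ e * n' + c)) ∧
      (fun n => M (2 ^ e * n + c)) ∈ Submodule.span ℤ G := by
    intro e
    induction e using Nat.strong_induction_on with
    | _ e ih =>
      intro c hc
      match e, ih, hc with
      | 0, _, hc =>
        have hc : c = 0 := by simpa using hc
        subst hc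
        refine ⟨fun n => n, by simp [gs], by simp, ?_⟩
        simpa using hGM (fun n => n) (by simp [gs])
      | 1, _, hc =>
        have hc : c = 0 ∨ c = 1 := by omega
        rcases hc with rfl | rfl
        · refine ⟨fun n => 2 * n, by simp [gs], by simp, ?_⟩
          simpa using hGM (fun n => 2 * n) (by simp [gs])
        · refine ⟨fun n => 2 * n + 1, by simp [gs], by simp, ?_⟩
          simpa using hGM (fun n => 2 * n + 1) (by simp [gs])
      | e + 2, ih, hc =>
        have hc' : c / 4 < 2 ^ e := by
          rw [pow_add] at hc; omega
        obtain ⟨g, hg, h1, h2⟩ := ih e (by omega) (c / 4) hc'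
        have hd : c % 4 < 4 := Nat.mod_lt _ (by norm_num)
        have hrw : ∀ n, 2 ^ (e + 2) * n + c = 4 * (2 ^ e * n + c / 4) + c % 4 := by
          intro n
          have : 2 ^ (e + 2) * n = 4 * (2 ^ e * n) := by ring
          omega
        refine ⟨g, hg, ?_, ?_⟩
        · intro n n' h
          rw [hrw, hrw]
          exact hq _ _ _ hd (h1 _ _ h)
        · have h3 := factor_mem_span q hfin g
            (fun n => M (4 * (2 ^ e * n + c / 4) + c % 4) - 2 * M (2 ^ e * n + c / 4))
            (fun n n' h => hA _ _ _ hd (h1 _ _ h)) G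
            (fun x hx => by convert hG g hg x hx)
          have h4 := Submodule.add_mem _ (Submodule.smul_mem _ (2 : ℤ) h2) h3
          convert h4 using 1
          funext n
          simp [hrw]
  have hle : Submodule.span ℤ (kernel2 M) ≤ Submodule.span ℤ G := by
    rw [Submodule.span_le]
    rintro f ⟨e, c, hc, rfl⟩
    obtain ⟨g, _, _, h⟩ := key e c hc
    exact h
  haveI : Module.Finite ℤ (Submodule.span ℤ G) := Module.Finite.span_of_finite ℤ hGfin
  haveI : IsNoetherian ℤ (Submodule.span ℤ G) := inferInstance
  have := isNoetherian_submodule.mp this _ hle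
  exact this

/-- Prefix part of a block of length four, in terms of `r a` and `(-1)^a r a`. -/
def pre4 (s : ℕ) (u v : ℤ) : ℤ :=
  if s = 0 then 0 else if s = 1 then u else if s = 2 then 2 * u else 2 * u + v

/-- Value of `r (4a+s)`. -/
def nextU (s : ℕ) (u v : ℤ) : ℤ :=
  if s = 0 then u else if s = 1 then u else if s = 2 then v else -v

/-- Value of `(-1)^(4a+s) r (4a+s)`. -/
def nextV (s : ℕ) (u v : ℤ) : ℤ :=
  if s = 0 then u else if s = 1 then -u else v

lemma pSum_eq_s10 (r : ℕ → ℤ) (i n : ℕ) : pSum r i n =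
    ∑ j ∈ Finset.range (i + n), r j - ∑ j ∈ Finset.range i, r j := by
  rw [Finset.sum_range_add, pSum]; ring

section RS
variable {r : ℕ → ℤ} (hre : ∀ n, r (2 * n) = r n) (hro : ∀ n, r (2 * n + 1) = (-1) ^ n * r n)

lemma rs_abs (hr0 : r 0 = 1) (hre : ∀ n, r (2 * n) = r n)
    (hro : ∀ n, r (2 * n + 1) = (-1) ^ n * r n) (n : ℕ) : |r n| = 1 := by
  induction n using Nat.strong_induction_on with
  | _ n ih =>
    rcases Nat.even_or_odd' n with ⟨k, rfl | rfl⟩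
    · rcases Nat.eq_zero_or_pos k with rfl | hk
      · simp [hr0]
      · rw [hre]; exact ih _ (by omega)
    · rw [hro, abs_mul, ih k (by omega)]; simp

lemma rs_block (hre : ∀ n, r (2 * n) = r n)
    (hro : ∀ n, r (2 * n + 1) = (-1) ^ n * r n) (a : ℕ) :
    r (4 * a) = r a ∧ r (4 * a + 1) = r a ∧ r (4 * a + 2) = (-1) ^ a * r a ∧
      r (4 * a + 3) = -((-1) ^ a * r a) := by
  refine ⟨?_, ?_, ?_, ?_⟩
  · rw [show 4 * a = 2 * (2 * a) by ring, hre, hre]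
  · rw [show 4 * a + 1 = 2 * (2 * a) + 1 by ring, hro, hre]; simp
  · rw [show 4 * a + 2 = 2 * (2 * a + 1) by ring, hre, hro]
  · rw [show 4 * a + 3 = 2 * (2 * a + 1) + 1 by ring, hro, hro]; simp [pow_succ]

lemma rs_nextU (hre : ∀ n, r (2 * n) = r n)
    (hro : ∀ n, r (2 * n + 1) = (-1) ^ n * r n) (a s : ℕ) (hs : s < 4) :
    r (4 * a + s) = nextU s (r a) ((-1) ^ a * r a) := by
  obtain ⟨h0, h1, h2, h3⟩ := rs_block hre hro a
  interval_cases s <;> simp [nextU, *]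

lemma rs_nextV (hre : ∀ n, r (2 * n) = r n)
    (hro : ∀ n, r (2 * n + 1) = (-1) ^ n * r n) (a s : ℕ) (hs : s < 4) :
    (-1) ^ (4 * a + s) * r (4 * a + s) = nextV s (r a) ((-1) ^ a * r a) := by
  obtain ⟨h0, h1, h2, h3⟩ := rs_block hre hro a
  have h : (-1 : ℤ) ^ (4 * a) = 1 := by rw [pow_mul]; norm_num
  interval_cases s <;> simp [nextV, pow_add, *]

lemma rs_prefix (hre : ∀ n, r (2 * n) = r n)
    (hro : ∀ n, r (2 * n + 1) = (-1) ^ n * r n) (a s : ℕ) (hs : s < 4) :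
    ∑ j ∈ Finset.range (4 * a + s), r j =
      2 * ∑ j ∈ Finset.range a, r j + pre4 s (r a) ((-1) ^ a * r a) := by
  have h4 : ∀ a, ∑ j ∈ Finset.range (4 * a), r j = 2 * ∑ j ∈ Finset.range a, r j := by
    intro a
    induction a with
    | zero => simp
    | succ a ih =>
      obtain ⟨h0, h1, h2, h3⟩ := rs_block hre hro a
      rw [show 4 * (a + 1) = 4 * a + 1 + 1 + 1 + 1 by ring, Finset.sum_range_succ,
        Finset.sum_range_succ, Finset.sum_range_succ, Finset.sum_range_succ,
        Finset.sum_range_succ, ih, h0, h1, h2, h3]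
      ring
  obtain ⟨h0, h1, h2, h3⟩ := rs_block hre hro a
  interval_cases s
  · simp [pre4, h4]
  · simp [pre4, h4, Finset.sum_range_succ, h0]
  · simp [pre4, h4, Finset.sum_range_succ, h0, h1]; ring
  · simp [pre4, h4, Finset.sum_range_succ, h0, h1, h2]; ring

lemma pSum_step_s10 (hre : ∀ n, r (2 * n) = r n)
    (hro : ∀ n, r (2 * n + 1) = (-1) ^ n * r n) (a s n k η t : ℕ) (hs : s < 4) (ht : t < 4)
    (h : s + k = 4 * η + t) :
    pSum r (4 * a + s) (4 * n + k) = 2 * pSum r a (n + η) - pre4 s (r a) ((-1) ^ a * r a)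
      + pre4 t (r (a + (n + η))) ((-1) ^ (a + (n + η)) * r (a + (n + η))) := by
  rw [pSum_eq_s10, pSum_eq_s10, show 4 * a + s + (4 * n + k) = 4 * (a + (n + η)) + t by omega,
    rs_prefix hre hro _ t ht, rs_prefix hre hro _ s hs]
  ring

end RS

lemma pre4_abs (s : ℕ) (u v : ℤ) (hu : |u| = 1) (hv : |v| = 1) : |pre4 s u v| ≤ 3 := by
  rw [abs_eq (by norm_num)] at hu hv
  unfold pre4
  rw [abs_le]
  split_ifs <;> omega

/-- Boundary data of a window `[i, i+l)` of deficit `D` relative to `m`. -/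
def Win (r : ℕ → ℤ) (m : ℤ) (l i : ℕ) (D u v u' v' : ℤ) : Prop :=
  m - pSum r i l = D ∧ r i = u ∧ (-1) ^ i * r i = v ∧ r (i + l) = u' ∧
    (-1) ^ (i + l) * r (i + l) = v'

/-- The state of the automaton: boundary data of all windows of length `n` or `n+1`
with deficit at most nine. -/
def stateQ (r M : ℕ → ℤ) (n : ℕ) : Set (ℕ × ℤ × ℤ × ℤ × ℤ × ℤ) :=
  {x | x.1 ≤ 1 ∧ x.2.1 ≤ 9 ∧
    ∃ i, Win r (M n) (n + x.1) i x.2.1 x.2.2.1 x.2.2.2.1 x.2.2.2.2.1 x.2.2.2.2.2}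

/-- The sequence `(M(n))ₙ` of maximal sums of consecutive
terms of the Rudin–Shapiro sequence is 2-regular: the ℤ-submodule of the
module of all integer sequences generated by its 2-kernel is finitely
generated. -/
theorem max_sum_two_regular
    (r : ℕ → ℤ) (hr0 : r 0 = 1)
    (hre : ∀ n, r (2 * n) = r n)
    (hro : ∀ n, r (2 * n + 1) = (-1) ^ n * r n)
    (M : ℕ → ℤ)
    (hM : ∀ n, IsGreatest (Set.range fun i => pSum r i n) (M n)) :
    (Submodule.span ℤ (kernel2 M)).FG := by
  have habs := rs_abs hr0 hre hro
  have hsgn : ∀ i : ℕ, |(-1) ^ i * r i| = 1 := fun i => by rw [abs_mul, habs]; simp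
  have hle : ∀ i n, pSum r i n ≤ M n := fun i n => (hM n).2 ⟨i, rfl⟩
  have hsucc : ∀ i n, pSum r i (n + 1) = pSum r i n + r (i + n) := fun i n => by
    simp [pSum, Finset.sum_range_succ]
  have hpre : ∀ s i, |pre4 s (r i) ((-1) ^ i * r i)| ≤ 3 :=
    fun s i => pre4_abs s _ _ (habs i) (hsgn i)
  -- lower bound for `M (4n+d)`
  have hlow : ∀ n d, d < 4 → 2 * M n - 3 ≤ M (4 * n + d) := by
    intro n d hd
    obtain ⟨a, ha⟩ := (hM n).1
    simp only at ha
    have h1 := pSum_step_s10 hre hro a 0 n d 0 d (by norm_num) hd (by ring)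
    have h2 := hle (4 * a + 0) (4 * n + d)
    have h3 := (abs_le.mp (hpre d (a + (n + 0)))).1
    have h4 : pre4 0 (r a) ((-1) ^ a * r a) = 0 := by simp [pre4]
    rw [Nat.add_zero] at h1
    simp only [Nat.add_zero] at *
    linarith
  -- transfer of near-optimal windows
  have htrans : ∀ m m' d, d < 4 → stateQ r M m = stateQ r M m' → ∀ ε, ε ≤ 1 → ∀ i,
      M (4 * m + d) - pSum r i (4 * m + d + ε) ≤ 9 → ∃ i',
      pSum r i' (4 * m' + d + ε) - 2 * M m' = pSum r i (4 * m + d + ε) - 2 * M m ∧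
      r i' = r i ∧ (-1) ^ i' * r i' = (-1) ^ i * r i ∧
      r (i' + (4 * m' + d + ε)) = r (i + (4 * m + d + ε)) ∧
      (-1) ^ (i' + (4 * m' + d + ε)) * r (i' + (4 * m' + d + ε)) =
        (-1) ^ (i + (4 * m + d + ε)) * r (i + (4 * m + d + ε)) := by
    intro m m' d hd hQ ε hε i hi
    obtain ⟨a, s, hs, rfl⟩ : ∃ a s, s < 4 ∧ i = 4 * a + s :=
      ⟨i / 4, i % 4, Nat.mod_lt _ (by norm_num), by omega⟩
    obtain ⟨η, t, hη, ht, hst⟩ : ∃ η t, η ≤ 1 ∧ t < 4 ∧ s + (d + ε) = 4 * η + t :=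
      ⟨(s + (d + ε)) / 4, (s + (d + ε)) % 4, by omega, Nat.mod_lt _ (by norm_num), by omega⟩
    have h1 := pSum_step_s10 hre hro a s m (d + ε) η t hs ht hst
    have h2 := abs_le.mp (hpre s a)
    have h3 := abs_le.mp (hpre t (a + (m + η)))
    have h4 := hlow m d hd
    rw [← Nat.add_assoc] at h1
    have hmem : (η, M m - pSum r a (m + η), r a, (-1) ^ a * r a, r (a + (m + η)),
        (-1) ^ (a + (m + η)) * r (a + (m + η))) ∈ stateQ r M m :=
      ⟨hη, by simp only; omega, a, rfl, rfl, rfl, rfl, rfl⟩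
    rw [hQ] at hmem
    obtain ⟨-, -, a', e1, e2, e3, e4, e5⟩ := hmem
    simp only at e1 e2 e3 e4 e5
    have h1' := pSum_step_s10 hre hro a' s m' (d + ε) η t hs ht hst
    rw [← Nat.add_assoc, e5, e4, e3, e2] at h1'
    have hend : ∀ b n, 4 * b + s + (4 * n + d + ε) = 4 * (b + (n + η)) + t := by
      intro b n; omega
    refine ⟨4 * a' + s, by linarith, ?_, ?_, ?_, ?_⟩
    · rw [rs_nextU hre hro _ s hs, rs_nextU hre hro _ s hs, e3, e2]
    · rw [rs_nextV hre hro _ s hs, rs_nextV hre hro _ s hs, e3, e2]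
    · rw [hend, hend, rs_nextU hre hro _ t ht, rs_nextU hre hro _ t ht, e5, e4]
    · rw [hend, hend, rs_nextV hre hro _ t ht, rs_nextV hre hro _ t ht, e5, e4]
  have hA1 : ∀ m m' d, d < 4 → stateQ r M m = stateQ r M m' →
      M (4 * m + d) - 2 * M m ≤ M (4 * m' + d) - 2 * M m' := by
    intro m m' d hd hQ
    obtain ⟨i, hi⟩ := (hM (4 * m + d)).1
    simp only at hi
    obtain ⟨i', h, -⟩ := htrans m m' d hd hQ 0 (by norm_num) i
      (by rw [Nat.add_zero, hi]; norm_num)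
    have := hle i' (4 * m' + d)
    rw [Nat.add_zero, Nat.add_zero] at h
    linarith
  have hA : ∀ m m' d, d < 4 → stateQ r M m = stateQ r M m' →
      M (4 * m + d) - 2 * M m = M (4 * m' + d) - 2 * M m' := fun m m' d hd hQ =>
    le_antisymm (hA1 m m' d hd hQ) (hA1 m' m d hd hQ.symm)
  have hq1 : ∀ m m' d, d < 4 → stateQ r M m = stateQ r M m' →
      stateQ r M (4 * m + d) ⊆ stateQ r M (4 * m' + d) := by
    rintro m m' d hd hQ ⟨ε, D, u, v, u', v'⟩ ⟨hε, hD, i, e1, e2, e3, e4, e5⟩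
    simp only at hε hD e1 e2 e3 e4 e5
    obtain ⟨i', f1, f2, f3, f4, f5⟩ := htrans m m' d hd hQ ε hε i (by omega)
    have := hA m m' d hd hQ
    exact ⟨hε, hD, i', by simp only; linarith, f2.trans e2, f3.trans e3, f4.trans e4, f5.trans e5⟩
  refine regular_of_automaton (stateQ r M) ?_ M (fun m m' d hd hQ =>
    Set.Subset.antisymm (hq1 m m' d hd hQ) (hq1 m' m d hd hQ.symm)) hA
  -- finiteness of the state set
  have hbox : (Set.Iic (1 : ℕ) ×ˢ Set.Icc (-1 : ℤ) 9 ×ˢ Set.Icc (-1 : ℤ) 1 ×ˢ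
      Set.Icc (-1 : ℤ) 1 ×ˢ Set.Icc (-1 : ℤ) 1 ×ˢ Set.Icc (-1 : ℤ) 1).Finite :=
    (Set.finite_Iic _).prod ((Set.finite_Icc _ _).prod ((Set.finite_Icc _ _).prod
      ((Set.finite_Icc _ _).prod ((Set.finite_Icc _ _).prod (Set.finite_Icc _ _)))))
  refine hbox.finite_subsets.subset ?_
  rintro _ ⟨n, rfl⟩ ⟨ε, D, u, v, u', v'⟩ ⟨hε, hD, i, e1, e2, e3, e4, e5⟩
  simp only at hε hD e1 e2 e3 e4 e5
  subst e2 e3 e4 e5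
  have hDl : -1 ≤ D := by
    have h1 := hle i n
    have h2 := hsucc i n
    have h3 := (abs_le.mp (habs (i + n)).le).2
    interval_cases ε
    · rw [Nat.add_zero] at e1; omega
    · omega
  exact ⟨hε, ⟨hDl, hD⟩, abs_le.mp (habs _).le, abs_le.mp (hsgn _).le, abs_le.mp (habs _).le,
    abs_le.mp (hsgn _).le⟩
end

section
/- Let ΔM(n) = M(n+1) − M(n). Then ΔM(i) = 1 for 0 ≤ i ≤ 3, and for every n ≥ 1: ΔM(4n) = −1, ΔM(4n+3) = 1, and ΔM(4n+1) = ΔM(4n+2) = ΔM(n). -/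
/-- Combinatorial core, phrased with the prefix sums `S` and `d i = r (2 i + 1)`. -/
theorem core_aux (r S d M : ℕ → ℤ)
    (hr : ∀ k, r k = 1 ∨ r k = -1) (hd : ∀ k, d k = 1 ∨ d k = -1)
    (hS : ∀ k, S (k + 1) = S k + r k)
    (S0 : ∀ a k, a = 4 * k → S a = 2 * S k)
    (S1 : ∀ a k, a = 4 * k + 1 → S a = S k + S (k + 1))
    (S2 : ∀ a k, a = 4 * k + 2 → S a = 2 * S (k + 1))
    (S3 : ∀ a k, a = 4 * k + 3 → S a = 2 * S (k + 1) + d k)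
    (d0 : ∀ a k, a = 4 * k → d a = r k)
    (d2 : ∀ a k, a = 4 * k + 2 → d a = d k)
    (d3 : ∀ a k, a = 4 * k + 3 → d a = d k)
    (r7 : r 7 = 1) (r8 : r 8 = 1) (r9 : r 9 = 1) (r10 : r 10 = 1)
    (d7 : d 7 = -1) (d8 : d 8 = 1) (d6 : d 6 = -1)
    (ub : ∀ i n a, a = i + n → S a - S i ≤ M n)
    (att : ∀ n, ∃ i, S (i + n) - S i = M n) :
    (M 0 = 0 ∧ M 1 = 1 ∧ M 2 = 2 ∧ M 3 = 3 ∧ M 4 = 4) ∧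
    ∀ n, 1 ≤ n → M (4 * n) = 2 * M n + 2 ∧ M (4 * n + 1) = 2 * M n + 1 ∧
      M (4 * n + 2) = M n + M (n + 1) + 1 ∧ M (4 * n + 3) = 2 * M (n + 1) + 1 ∧
      M (4 * n + 4) = 2 * M (n + 1) + 2 := by
  have up : ∀ n, M (n + 1) ≤ M n + 1 := by
    intro n
    obtain ⟨i, hi⟩ := att (n + 1)
    have h1 := ub i n _ rfl
    have h2 := hS (i + n)
    have h3 := hr (i + n)
    rw [← add_assoc] at hi
    omega
  have dn : ∀ n, M n ≤ M (n + 1) + 1 := by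
    intro n
    obtain ⟨i, hi⟩ := att n
    have h1 := ub i (n + 1) (i + n + 1) rfl
    have h2 := hS (i + n)
    have h3 := hr (i + n)
    omega
  have U0 : ∀ n, M (4 * n) ≤ 2 * M n + 2 := by
    intro n
    obtain ⟨A, hA⟩ := att (4 * n)
    obtain ⟨i, h | h | h | h⟩ : ∃ i, A = 4 * i ∨ A = 4 * i + 1 ∨ A = 4 * i + 2 ∨ A = 4 * i + 3 :=
      ⟨A / 4, by omega⟩
    · have := S0 A i h
      have := S0 (A + 4 * n) (i + n) (by omega)
      have := ub i n (i + n) rfl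
      omega
    · have := S1 A i h
      have := S1 (A + 4 * n) (i + n) (by omega)
      have := ub i n (i + n) rfl
      have := ub (i + 1) n (i + n + 1) (by omega)
      omega
    · have := S2 A i h
      have := S2 (A + 4 * n) (i + n) (by omega)
      have := ub (i + 1) n (i + n + 1) (by omega)
      omega
    · have := S3 A i h
      have := S3 (A + 4 * n) (i + n) (by omega)
      have := ub (i + 1) n (i + n + 1) (by omega)
      have := hd i
      have := hd (i + n)
      omega
  have U1 : ∀ n, M (4 * n + 1) ≤ 2 * M n + 1 := by
    intro n
    obtain ⟨A, hA⟩ := att (4 * n + 1)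
    have := up n
    have := dn n
    obtain ⟨i, h | h | h | h⟩ : ∃ i, A = 4 * i ∨ A = 4 * i + 1 ∨ A = 4 * i + 2 ∨ A = 4 * i + 3 :=
      ⟨A / 4, by omega⟩
    · have := S0 A i h
      have := S1 (A + (4 * n + 1)) (i + n) (by omega)
      have := ub i n (i + n) rfl
      have := ub i (n + 1) (i + n + 1) rfl
      omega
    · have := S1 A i h
      have := S2 (A + (4 * n + 1)) (i + n) (by omega)
      have := ub i (n + 1) (i + n + 1) rfl
      have := ub (i + 1) n (i + n + 1) (by omega)
      omega
    · have := S2 A i h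
      have := S3 (A + (4 * n + 1)) (i + n) (by omega)
      have := ub (i + 1) n (i + n + 1) (by omega)
      have := hd (i + n)
      omega
    · have := S3 A i h
      have := S0 (A + (4 * n + 1)) (i + n + 1) (by omega)
      have := ub (i + 1) n (i + n + 1) (by omega)
      have := hd i
      omega
  have U2 : ∀ n, M (4 * n + 2) ≤ M n + M (n + 1) + 1 := by
    intro n
    obtain ⟨A, hA⟩ := att (4 * n + 2)
    have := up n
    have := dn n
    obtain ⟨i, h | h | h | h⟩ : ∃ i, A = 4 * i ∨ A = 4 * i + 1 ∨ A = 4 * i + 2 ∨ A = 4 * i + 3 :=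
      ⟨A / 4, by omega⟩
    · have := S0 A i h
      have := S2 (A + (4 * n + 2)) (i + n) (by omega)
      have := ub i (n + 1) (i + n + 1) rfl
      omega
    · have := S1 A i h
      have := S3 (A + (4 * n + 2)) (i + n) (by omega)
      have := ub i (n + 1) (i + n + 1) rfl
      have := ub (i + 1) n (i + n + 1) (by omega)
      have := hd (i + n)
      omega
    · have := S2 A i h
      have := S0 (A + (4 * n + 2)) (i + n + 1) (by omega)
      have := ub (i + 1) n (i + n + 1) (by omega)
      omega
    · have := S3 A i h
      have := S1 (A + (4 * n + 2)) (i + n + 1) (by omega)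
      have := ub (i + 1) n (i + n + 1) (by omega)
      have := ub (i + 1) (n + 1) (i + n + 1 + 1) (by omega)
      have := hd i
      omega
  have U3 : ∀ n, M (4 * n + 3) ≤ 2 * M (n + 1) + 1 := by
    intro n
    obtain ⟨A, hA⟩ := att (4 * n + 3)
    have := up n
    have := dn n
    obtain ⟨i, h | h | h | h⟩ : ∃ i, A = 4 * i ∨ A = 4 * i + 1 ∨ A = 4 * i + 2 ∨ A = 4 * i + 3 :=
      ⟨A / 4, by omega⟩
    · have := S0 A i h
      have := S3 (A + (4 * n + 3)) (i + n) (by omega)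
      have := ub i (n + 1) (i + n + 1) rfl
      have := hd (i + n)
      omega
    · have := S1 A i h
      have := S0 (A + (4 * n + 3)) (i + n + 1) (by omega)
      have := ub i (n + 1) (i + n + 1) rfl
      have := ub (i + 1) n (i + n + 1) (by omega)
      omega
    · have := S2 A i h
      have := S1 (A + (4 * n + 3)) (i + n + 1) (by omega)
      have := ub (i + 1) n (i + n + 1) (by omega)
      have := ub (i + 1) (n + 1) (i + n + 1 + 1) (by omega)
      omega
    · have := S3 A i h
      have := S2 (A + (4 * n + 3)) (i + n + 1) (by omega)
      have := ub (i + 1) (n + 1) (i + n + 1 + 1) (by omega)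
      have := hd i
      omega
  -- a maximal window with prescribed boundary behaviour
  obtain ⟨P, hP⟩ : ∃ P : ℕ → Prop, ∀ n, P n ↔ ∃ i j, j = i + n ∧
      S (j + 1) - S (i + 1) = M n ∧ d i = -1 ∧ d j = 1 := ⟨_, fun _ => Iff.rfl⟩
  -- nested maximal windows of lengths `n` and `n + 1`
  obtain ⟨Q, hQ⟩ : ∃ Q : ℕ → Prop, ∀ n, Q n ↔
      ((∃ i j, j = i + n ∧ S (j + 1) - S (i + 1) = M n ∧ S (j + 2) - S (i + 1) = M (n + 1) ∧
        d i = -1 ∧ r (j + 1) = 1) ∨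
       (∃ i j, j = i + n ∧ S (j + 1) - S i = M (n + 1) ∧ S (j + 1) - S (i + 1) = M n ∧
        d j = 1 ∧ r i = -1)) := ⟨_, fun _ => Iff.rfl⟩
  have P0 : ∀ n, P n → M (4 * n) = 2 * M n + 2 ∧ M (4 * n + 1) = 2 * M n + 1 ∧
      P (4 * n) ∧ P (4 * n + 1) ∧ Q (4 * n) := by
    intro n h
    obtain ⟨i, j, hj, h1, h2, h3⟩ := (hP n).1 h
    have a1 := S3 (4 * i + 2 + 1) i rfl
    have a2 := S3 (4 * j + 2 + 1) j rfl
    have a3 := S0 (4 * j + 3 + 1) (j + 1) (by omega)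
    have a4 := S2 (4 * i + 2) i rfl
    have b1 := ub (4 * i + 2 + 1) (4 * n) (4 * j + 2 + 1) (by omega)
    have b2 := ub (4 * i + 2 + 1) (4 * n + 1) (4 * j + 3 + 1) (by omega)
    have c1 := U0 n
    have c2 := U1 n
    have e1 := d2 (4 * i + 2) i rfl
    have e2 := d2 (4 * j + 2) j rfl
    have e3 := d3 (4 * j + 3) j rfl
    have f := hS (4 * i + 2)
    refine ⟨by omega, by omega, (hP _).2 ⟨4 * i + 2, 4 * j + 2, by omega, by omega, by omega, by omega⟩,
      (hP _).2 ⟨4 * i + 2, 4 * j + 3, by omega, by omega, by omega, by omega⟩,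
      (hQ _).2 (Or.inr ⟨4 * i + 2, 4 * j + 2, by omega, by omega, by omega, by omega, by omega⟩)⟩
  have P3 : ∀ n, P (n + 1) → M (4 * n + 3) = 2 * M (n + 1) + 1 ∧
      M (4 * n + 4) = 2 * M (n + 1) + 2 ∧ P (4 * n + 3) ∧ Q (4 * n + 3) := by
    intro n h
    obtain ⟨g1, -⟩ := P0 _ h
    rw [show 4 * (n + 1) = 4 * n + 4 by ring] at g1
    obtain ⟨i, j, hj, h1, h2, h3⟩ := (hP (n + 1)).1 h
    have a1 := S0 (4 * i + 3 + 1) (i + 1) (by omega)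
    have a2 := S3 (4 * j + 2 + 1) j rfl
    have b1 := ub (4 * i + 3 + 1) (4 * n + 3) (4 * j + 2 + 1) (by omega)
    have c1 := U3 n
    have e1 := d3 (4 * i + 3) i rfl
    have e2 := d2 (4 * j + 2) j rfl
    have e3 := d2 (4 * i + 2) i rfl
    have a3 := S3 (4 * i + 2 + 1) i rfl
    have a4 := S2 (4 * j + 1 + 1) j rfl
    have a5 : S (4 * j + 1 + 2) = _ := a2
    have f : S (4 * j + 2 + 1) = S (4 * j + 1 + 1) + r (4 * j + 1 + 1) := hS (4 * j + 2)
    refine ⟨by omega, g1, (hP _).2 ⟨4 * i + 3, 4 * j + 2, by omega, by omega, by omega, by omega⟩,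
      (hQ _).2 (Or.inl ⟨4 * i + 2, 4 * j + 1, by omega, by omega, ?_, by omega, by omega⟩)⟩
    rw [show 4 * n + 3 + 1 = 4 * n + 4 by ring]
    omega
  have Q1 : ∀ n, P n → P (n + 1) → Q n → M (4 * n + 2) = M n + M (n + 1) + 1 ∧
      P (4 * n + 2) ∧ Q (4 * n + 1) ∧ Q (4 * n + 2) := by
    intro n p p' q
    obtain ⟨-, m1, -⟩ := P0 n p
    obtain ⟨m3, -⟩ := P3 n p'
    have m2 := U2 n
    rcases (hQ n).1 q with ⟨i, j, hj, h1, h2, h3, h4⟩ | ⟨i, j, hj, h1, h2, h3, h4⟩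
    · have a1 := S3 (4 * i + 2 + 1) i rfl
      have a2 : S (4 * j + 3 + 1) = _ := S0 _ (j + 1) (by omega)
      have a3 : S (4 * j + 3 + 2) = S (j + 1) + S (j + 2) := S1 _ (j + 1) (by omega)
      have a4 : S (4 * j + 4 + 1) = S (j + 1) + S (j + 2) := S1 _ (j + 1) (by omega)
      have a5 : S (4 * j + 4 + 2) = 2 * S (j + 2) := S2 _ (j + 1) (by omega)
      have b1 := ub (4 * i + 2 + 1) (4 * n + 2) (4 * j + 4 + 1) (by omega)
      have e1 := d2 (4 * i + 2) i rfl
      have e2 := d0 (4 * j + 4) (j + 1) (by omega)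
      have f0 : S (j + 2) = S (j + 1) + r (j + 1) := hS (j + 1)
      have f1 : S (4 * j + 3 + 2) = S (4 * j + 3 + 1) + r (4 * j + 3 + 1) := hS (4 * j + 3 + 1)
      have f2 : S (4 * j + 4 + 2) = S (4 * j + 4 + 1) + r (4 * j + 4 + 1) := hS (4 * j + 4 + 1)
      have m : M (4 * n + 2) = M n + M (n + 1) + 1 := by omega
      have m' : M (4 * n + 1 + 1) = M n + M (n + 1) + 1 := m
      have m3' : M (4 * n + 2 + 1) = 2 * M (n + 1) + 1 := m3
      refine ⟨m, (hP _).2 ⟨4 * i + 2, 4 * j + 4, by omega, by omega, by omega, by omega⟩,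
        (hQ _).2 (Or.inl ⟨4 * i + 2, 4 * j + 3, by omega, by omega, by omega, by omega, by omega⟩),
        (hQ _).2 (Or.inl ⟨4 * i + 2, 4 * j + 4, by omega, by omega, by omega, by omega, by omega⟩)⟩
    · have a1 := S3 (4 * j + 2 + 1) j rfl
      have a2 := S0 (4 * i) i rfl
      have a3 := S1 (4 * i + 1) i rfl
      have a4 : S (4 * i + 1 + 1) = _ := S2 _ i rfl
      have b1 := ub (4 * i + 1) (4 * n + 2) (4 * j + 2 + 1) (by omega)
      have e1 := d2 (4 * j + 2) j rfl
      have e2 := d0 (4 * i) i rfl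
      have f0 := hS i
      have f1 := hS (4 * i)
      have f2 := hS (4 * i + 1)
      have m : M (4 * n + 2) = M n + M (n + 1) + 1 := by omega
      have m' : M (4 * n + 1 + 1) = M n + M (n + 1) + 1 := m
      have m3' : M (4 * n + 2 + 1) = 2 * M (n + 1) + 1 := m3
      refine ⟨m, (hP _).2 ⟨4 * i, 4 * j + 2, by omega, by omega, by omega, by omega⟩,
        (hQ _).2 (Or.inr ⟨4 * i + 1, 4 * j + 2, by omega, by omega, by omega, by omega, by omega⟩),
        (hQ _).2 (Or.inr ⟨4 * i, 4 * j + 2, by omega, by omega, by omega, by omega, by omega⟩)⟩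
  have M0 : M 0 = 0 := by
    obtain ⟨i, hi⟩ := att 0
    simp at hi
    omega
  have s7 : S 8 = S 7 + r 7 := hS 7
  have s8 : S 9 = S 8 + r 8 := hS 8
  have s9 : S 10 = S 9 + r 9 := hS 9
  have s10 : S 11 = S 10 + r 10 := hS 10
  have M1 : M 1 = 1 := by
    have : M 1 ≤ M 0 + 1 := up 0
    have := ub 8 1 9 rfl
    omega
  have M2 : M 2 = 2 := by
    have : M 2 ≤ M 1 + 1 := up 1
    have := ub 8 2 10 rfl
    omega
  have M3 : M 3 = 3 := by
    have : M 3 ≤ M 2 + 1 := up 2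
    have := ub 8 3 11 rfl
    omega
  have p1 : P 1 := (hP 1).2 ⟨7, 8, rfl, by norm_num; omega, d7, d8⟩
  have p2 : P 2 := (hP 2).2 ⟨6, 8, rfl, by norm_num; omega, d6, d8⟩
  have q1 : Q 1 := (hQ 1).2 (Or.inl ⟨7, 8, rfl, by norm_num; omega, by norm_num; omega, d7, r9⟩)
  have q2 : Q 2 := (hQ 2).2 (Or.inl ⟨7, 9, rfl, by norm_num; omega, by norm_num; omega, d7, r10⟩)
  obtain ⟨-, M4, p3, q3⟩ := P3 0 p1
  norm_num at M4 p3 q3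
  have key : ∀ n, 1 ≤ n → P n ∧ Q n := by
    intro n
    induction n using Nat.strong_induction_on with
    | _ n ih =>
      intro hn
      by_cases hs : n < 4
      · interval_cases n
        · exact ⟨p1, q1⟩
        · exact ⟨p2, q2⟩
        · exact ⟨p3, q3⟩
      · obtain ⟨k, hk⟩ : ∃ k, k = n / 4 := ⟨_, rfl⟩
        obtain ⟨pk, qk⟩ := ih k (by omega) (by omega)
        obtain ⟨pk', -⟩ := ih (k + 1) (by omega) (by omega)
        obtain ⟨-, -, x0, x1, y0⟩ := P0 k pk
        obtain ⟨-, -, x3, y3⟩ := P3 k pk'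
        obtain ⟨-, x2, y1, y2⟩ := Q1 k pk pk' qk
        obtain h | h | h | h : n = 4 * k ∨ n = 4 * k + 1 ∨ n = 4 * k + 2 ∨ n = 4 * k + 3 := by omega
        · exact h ▸ ⟨x0, y0⟩
        · exact h ▸ ⟨x1, y1⟩
        · exact h ▸ ⟨x2, y2⟩
        · exact h ▸ ⟨x3, y3⟩
  refine ⟨⟨M0, M1, M2, M3, by omega⟩, fun n hn => ?_⟩
  obtain ⟨p, q⟩ := key n hn
  obtain ⟨p', -⟩ := key (n + 1) (by omega)
  exact ⟨(P0 n p).1, (P0 n p).2.1, (Q1 n p p' q).1, (P3 n p').1, (P3 n p').2.1⟩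

/-- For `ΔM(n) = M(n+1) − M(n)`: `ΔM(i) = 1` for
`0 ≤ i ≤ 3`, and for `n ≥ 1`: `ΔM(4n) = −1`, `ΔM(4n+3) = 1`,
`ΔM(4n+1) = ΔM(4n+2) = ΔM(n)`. -/
theorem delta_max_sum_recurrences
    (r : ℕ → ℤ) (hr0 : r 0 = 1)
    (hre : ∀ n, r (2 * n) = r n)
    (hro : ∀ n, r (2 * n + 1) = (-1) ^ n * r n)
    (M : ℕ → ℤ)
    (hM : ∀ n, IsGreatest (Set.range fun i => pSum r i n) (M n))
    (ΔM : ℕ → ℤ) (hΔ : ∀ n, ΔM n = M (n + 1) - M n) :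
    (∀ i, i ≤ 3 → ΔM i = 1) ∧
    (∀ n, 1 ≤ n →
      ΔM (4 * n) = -1 ∧
      ΔM (4 * n + 3) = 1 ∧
      ΔM (4 * n + 1) = ΔM n ∧
      ΔM (4 * n + 2) = ΔM n) := by
  obtain ⟨S, hSd⟩ : ∃ S : ℕ → ℤ, ∀ n, S n = ∑ j ∈ Finset.range n, r j := ⟨_, fun _ => rfl⟩
  have hS : ∀ k, S (k + 1) = S k + r k := by
    intro k
    rw [hSd, hSd, Finset.sum_range_succ]
  have hp : ∀ i n, pSum r i n = S (i + n) - S i := by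
    intro i n
    rw [hSd, hSd, Finset.sum_range_add]
    simp [pSum]
  have hr : ∀ k, r k = 1 ∨ r k = -1 := by
    intro k
    induction k using Nat.strong_induction_on with
    | _ k ih =>
      rcases Nat.even_or_odd' k with ⟨m, h | h⟩
      · rcases Nat.eq_zero_or_pos k with h0 | h0
        · left; rw [h0, hr0]
        · rw [h, hre]; exact ih m (by omega)
      · rw [h, hro]
        rcases neg_one_pow_eq_or ℤ m with h1 | h1 <;> rcases ih m (by omega) with h2 | h2 <;>
          simp [h1, h2]
  have r0 : ∀ k, r (4 * k) = r k := fun k => by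
    rw [show 4 * k = 2 * (2 * k) by ring, hre, hre]
  have r1 : ∀ k, r (4 * k + 1) = r k := fun k => by
    rw [show 4 * k + 1 = 2 * (2 * k) + 1 by ring, hro, hre]; simp
  have r2 : ∀ k, r (4 * k + 2) = r (2 * k + 1) := fun k => by
    rw [show 4 * k + 2 = 2 * (2 * k + 1) by ring, hre]
  have r3 : ∀ k, r (4 * k + 3) = - r (2 * k + 1) := fun k => by
    rw [show 4 * k + 3 = 2 * (2 * k + 1) + 1 by ring, hro (2 * k + 1)]; simp [pow_succ]
  have T0 : ∀ k, S (4 * k) = 2 * S k := by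
    intro k
    induction k with
    | zero => simp [hSd]
    | succ k ih =>
      have h0 := hS (4 * k)
      have h1 := hS (4 * k + 1)
      have h2 := hS (4 * k + 2)
      have h3 := hS (4 * k + 3)
      have := hS k
      rw [r0] at h0
      rw [r1] at h1
      rw [r2] at h2
      rw [r3] at h3
      rw [show 4 * (k + 1) = 4 * k + 3 + 1 by ring]
      linarith
  have T1 : ∀ k, S (4 * k + 1) = S k + S (k + 1) := fun k => by
    rw [hS, hS, T0, r0]; ring
  have T2 : ∀ k, S (4 * k + 2) = 2 * S (k + 1) := fun k => by
    rw [hS (4 * k + 1), T1, r1, hS]; ring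
  have T3 : ∀ k, S (4 * k + 3) = 2 * S (k + 1) + r (2 * k + 1) := fun k => by
    rw [hS (4 * k + 2), T2, r2]
  have v1 : r 1 = 1 := by have := hro 0; simpa [hr0] using this
  have v3 : r 3 = -1 := by have := hro 1; simpa [v1] using this
  have v7 : r 7 = 1 := by have := hro 3; norm_num [v3] at this; exact this
  have v15 : r 15 = -1 := by have := hro 7; norm_num [v7] at this; exact this
  have v2 : r 2 = 1 := by have := hre 1; simpa [v1] using this
  have v4 : r 4 = 1 := by have := hre 2; simpa [v2] using this
  have v8 : r 8 = 1 := by have := hre 4; simpa [v4] using this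
  have v5 : r 5 = 1 := by have := hro 2; simpa [v2] using this
  have v10 : r 10 = 1 := by have := hre 5; simpa [v5] using this
  have v9 : r 9 = 1 := by have := hro 4; norm_num [v4] at this; exact this
  have v17 : r 17 = 1 := by have := hro 8; norm_num [v8] at this; exact this
  have v6 : r 6 = -1 := by have := hre 3; simpa [v3] using this
  have v13 : r 13 = -1 := by have := hro 6; norm_num [v6] at this; exact this
  obtain ⟨⟨m0, m1, m2, m3, m4⟩, hm⟩ := core_aux r S (fun k => r (2 * k + 1)) M hr (fun k => hr _) hS
    (fun a k h => h ▸ T0 k) (fun a k h => h ▸ T1 k) (fun a k h => h ▸ T2 k) (fun a k h => h ▸ T3 k)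
    (fun a k h => by
      subst h
      show r (2 * (4 * k) + 1) = r k
      rw [show 2 * (4 * k) + 1 = 4 * (2 * k) + 1 by ring, r1, hre])
    (fun a k h => by
      subst h
      show r (2 * (4 * k + 2) + 1) = r (2 * k + 1)
      rw [show 2 * (4 * k + 2) + 1 = 4 * (2 * k + 1) + 1 by ring, r1])
    (fun a k h => by
      subst h
      show r (2 * (4 * k + 3) + 1) = r (2 * k + 1)
      rw [show 2 * (4 * k + 3) + 1 = 4 * (2 * k + 1) + 3 by ring, r3,
        show 2 * (2 * k + 1) + 1 = 4 * k + 3 by ring, r3, neg_neg])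
    v7 v8 v9 v10 v15 v17 v13
    (fun i n a h => by
      subst h
      rw [← hp]
      exact (hM n).2 ⟨i, rfl⟩)
    (fun n => by
      obtain ⟨i, hi⟩ := (hM n).1
      exact ⟨i, by rw [← hp]; exact hi⟩)
  refine ⟨fun i hi => ?_, fun n hn => ?_⟩
  · rw [hΔ]
    interval_cases i <;> norm_num [m0, m1, m2, m3, m4]
  · obtain ⟨h0, h1, h2, h3, h4⟩ := hm n hn
    have e0 := hΔ (4 * n)
    have e1 : ΔM (4 * n + 1) = M (4 * n + 2) - M (4 * n + 1) := hΔ _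
    have e2 : ΔM (4 * n + 2) = M (4 * n + 3) - M (4 * n + 2) := hΔ _
    have e3 : ΔM (4 * n + 3) = M (4 * n + 4) - M (4 * n + 3) := hΔ _
    have e := hΔ n
    refine ⟨?_, ?_, ?_, ?_⟩ <;> linarith
end

section
/- The sequence (ΔM(n))_{n ≥ 0}, where ΔM(n) = M(n+1) − M(n), is 2-automatic, i.e., its 2-kernel {(ΔM(2^e n + c))_{n≥0} : e ≥ 0, 0 ≤ c < 2^e} is a finite set of sequences. -/
/-- A sequence factoring through a finite-range sequence stable under `n ↦ 4n+c` has finite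
2-kernel. -/
theorem kernel2_finite_of_factor {α : Type*} (D : ℕ → α) (hfin : (Set.range D).Finite)
    (hstep : ∀ c < 4, ∀ n m, D n = D m → D (4 * n + c) = D (4 * m + c))
    (f : ℕ → ℤ) (hf : ∀ n m, D n = D m → f n = f m) : (kernel2 f).Finite := by
  classical
  have hX : Finite (Set.range D) := hfin
  let E : ℕ → Set.range D := fun n => ⟨D n, n, rfl⟩
  have hE : ∀ n m, E n = E m ↔ D n = D m := fun n m => Subtype.ext_iff
  have hpick : ∀ x : Set.range D, ∃ n, E n = x := by
    rintro ⟨_, n, rfl⟩; exact ⟨n, rfl⟩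
  choose p hp using hpick
  have key : ∀ k c, c < 4 ^ k → ∃ h : Set.range D → Set.range D,
      ∀ n, E (4 ^ k * n + c) = h (E n) := by
    intro k
    induction k with
    | zero =>
      intro c hc
      refine ⟨id, fun n => ?_⟩
      have : c = 0 := by simpa using hc
      simp [this]
    | succ k ih =>
      intro c hc
      obtain ⟨h, hh⟩ := ih (c / 4) (by rw [pow_succ] at hc; omega)
      refine ⟨fun x => E (4 * p (h x) + c % 4), fun n => ?_⟩
      have e1 : 4 ^ (k + 1) * n + c = 4 * (4 ^ k * n + c / 4) + c % 4 := by
        have := Nat.div_add_mod c 4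
        rw [pow_succ]; linarith
      rw [e1, hE]
      apply hstep _ (Nat.mod_lt _ (by norm_num))
      rw [← hE, hp, hh]
  let Φ : (Set.range D → Set.range D) × Fin 3 → (ℕ → ℤ) := fun q n =>
    f (p (q.1 (E (if q.2 = 0 then n else if q.2 = 1 then 2 * n else 2 * n + 1))))
  refine (Set.finite_range Φ).subset ?_
  rintro g ⟨e, c, hc, rfl⟩
  have fin : ∀ k c, c < 4 ^ k → ∃ h : Set.range D → Set.range D,
      ∀ n, f (4 ^ k * n + c) = f (p (h (E n))) := by
    intro k c hc
    obtain ⟨h, hh⟩ := key k c hc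
    refine ⟨h, fun n => hf _ _ ?_⟩
    rw [← hE, hp, hh]
  rcases Nat.even_or_odd' e with ⟨k, rfl | rfl⟩
  · rw [pow_mul] at *
    obtain ⟨h, hh⟩ := fin k c hc
    refine ⟨(h, 0), ?_⟩
    funext n
    simp [Φ, hh]
  · rw [pow_succ, pow_mul] at *
    norm_num at hc
    by_cases hlt : c < 4 ^ k
    · obtain ⟨h, hh⟩ := fin k c hlt
      refine ⟨(h, 1), ?_⟩
      funext n
      have : (2 ^ 2) ^ k * 2 * n + c = 4 ^ k * (2 * n) + c := by norm_num; ring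
      simp only [this, hh]
      simp [Φ]
    · obtain ⟨h, hh⟩ := fin k (c - 4 ^ k) (by omega)
      refine ⟨(h, 2), ?_⟩
      funext n
      have : (2 ^ 2) ^ k * 2 * n + c = 4 ^ k * (2 * n + 1) + (c - 4 ^ k) := by
        norm_num
        have : c = 4 ^ k + (c - 4 ^ k) := by omega
        rw [mul_add]; linarith
      simp only [this, hh]
      simp [Φ]

theorem delta_max_sum_two_automatic
    (r : ℕ → ℤ) (hr0 : r 0 = 1)
    (hre : ∀ n, r (2 * n) = r n)
    (hro : ∀ n, r (2 * n + 1) = (-1) ^ n * r n)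
    (M : ℕ → ℤ)
    (hM : ∀ n, IsGreatest (Set.range fun i => pSum r i n) (M n)) :
    (kernel2 fun n => M (n + 1) - M n).Finite := by
  classical
  have hsgn : ∀ n : ℕ, ((-1 : ℤ) ^ n = 1 ∧ n % 2 = 0) ∨ ((-1 : ℤ) ^ n = -1 ∧ n % 2 = 1) := by
    intro n
    rcases Nat.even_or_odd n with h | h
    · exact Or.inl ⟨h.neg_one_pow, Nat.even_iff.mp h⟩
    · exact Or.inr ⟨h.neg_one_pow, Nat.odd_iff.mp h⟩
  have hr1 : ∀ n, r n = 1 ∨ r n = -1 := by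
    intro n
    induction n using Nat.strong_induction_on with
    | _ n ih =>
      rcases Nat.even_or_odd' n with ⟨k, rfl | rfl⟩
      · rcases Nat.eq_zero_or_pos k with rfl | hk
        · exact Or.inl hr0
        · rw [hre]; exact ih k (by omega)
      · rw [hro]
        rcases hsgn k with ⟨h, -⟩ | ⟨h, -⟩ <;> rcases ih k (by omega) with h' | h' <;>
          simp [h, h']
  let S : ℕ → ℤ := fun n => ∑ j ∈ Finset.range n, r j
  have hS1 : ∀ n, S (n + 1) = S n + r n := fun n => Finset.sum_range_succ _ _
  have hpS : ∀ i n, pSum r i n = S (i + n) - S i := by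
    intro i n
    induction n with
    | zero => simp [pSum]
    | succ n ih =>
      have : pSum r i (n + 1) = pSum r i n + r (i + n) := Finset.sum_range_succ _ _
      rw [this, ih, ← add_assoc, hS1]; ring
  have hMle : ∀ n i, S (i + n) - S i ≤ M n := fun n i => by
    rw [← hpS]; exact (hM n).2 ⟨i, rfl⟩
  have hMex : ∀ n, ∃ i, S (i + n) - S i = M n := fun n => by
    obtain ⟨i, hi⟩ := (hM n).1
    exact ⟨i, by rw [← hpS]; exact hi⟩
  have hMstep : ∀ n, M (n + 1) ≤ M n + 1 ∧ M n ≤ M (n + 1) + 1 := by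
    intro n
    constructor
    · obtain ⟨i, hi⟩ := hMex (n + 1)
      have h1 := hMle n i
      rw [← add_assoc, hS1] at hi
      rcases hr1 (i + n) with h | h <;> omega
    · obtain ⟨i, hi⟩ := hMex n
      have h1 := hMle (n + 1) i
      rw [← add_assoc, hS1] at h1
      rcases hr1 (i + n) with h | h <;> omega
  -- block facts
  have b0 : ∀ i, r (4 * i) = r i := fun i => by
    rw [show 4 * i = 2 * (2 * i) by ring, hre, hre]
  have b1 : ∀ i, r (4 * i + 1) = r i := fun i => by
    rw [show 4 * i + 1 = 2 * (2 * i) + 1 by ring, hro, hre]; simp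
  have b2 : ∀ i, r (4 * i + 2) = (-1) ^ i * r i := fun i => by
    rw [show 4 * i + 2 = 2 * (2 * i + 1) by ring, hre, hro]
  have b3 : ∀ i, r (4 * i + 3) = - ((-1) ^ i * r i) := fun i => by
    rw [show 4 * i + 3 = 2 * (2 * i + 1) + 1 by ring, hro, hro, pow_succ, pow_mul]; simp
  have s1 : ∀ i, S (4 * i + 1) = S (4 * i) + r i := fun i => by rw [hS1, b0]
  have s2 : ∀ i, S (4 * i + 2) = S (4 * i) + 2 * r i := fun i => by
    rw [show 4 * i + 2 = 4 * i + 1 + 1 by ring, hS1, s1, b1]; ring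
  have s3 : ∀ i, S (4 * i + 3) = S (4 * i) + 2 * r i + (-1) ^ i * r i := fun i => by
    rw [show 4 * i + 3 = 4 * i + 2 + 1 by ring, hS1, s2, b2]
  have s0 : ∀ i, S (4 * i) = 2 * S i := by
    intro i
    induction i with
    | zero => simp [S]
    | succ i ih =>
      rw [show 4 * (i + 1) = 4 * i + 3 + 1 by ring, hS1, s3, b3, ih, hS1]; ring
  let st : ℕ → ℕ × ℤ := fun i => (i % 2, r i)
  have hblk : ∀ i j a, a < 4 → st i = st j →
      S (4 * i + a) - 2 * S i = S (4 * j + a) - 2 * S j ∧ st (4 * i + a) = st (4 * j + a) := by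
    intro i j a ha h
    have h1 : i % 2 = j % 2 := congrArg Prod.fst h
    have h2 : r i = r j := congrArg Prod.snd h
    have h3 : (-1 : ℤ) ^ i = (-1) ^ j := by
      rcases hsgn i with ⟨h, h'⟩ | ⟨h, h'⟩ <;> rcases hsgn j with ⟨g, g'⟩ | ⟨g, g'⟩ <;>
        first | omega | rw [h, g]
    have hp : (4 * i + a) % 2 = (4 * j + a) % 2 := by omega
    have hrr : r (4 * i + a) = r (4 * j + a) := by
      interval_cases a
      · simp only [add_zero]; rw [b0, b0, h2]
      · rw [b1, b1, h2]
      · rw [b2, b2, h2, h3]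
      · rw [b3, b3, h2, h3]
    refine ⟨?_, Prod.ext hp hrr⟩
    interval_cases a
    · simp only [add_zero]; rw [s0, s0]; ring
    · rw [s1, s1, s0, s0, h2]; ring
    · rw [s2, s2, s0, s0, h2]; ring
    · rw [s3, s3, s0, s0, h2, h3]; ring
  have hbd : ∀ i a, a < 4 → -3 ≤ S (4 * i + a) - 2 * S i ∧ S (4 * i + a) - 2 * S i ≤ 3 := by
    intro i a ha
    interval_cases a
    · simp only [add_zero]; rw [s0]; constructor <;> linarith
    · rw [s1, s0]; rcases hr1 i with h | h <;> rw [h] <;> constructor <;> linarith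
    · rw [s2, s0]; rcases hr1 i with h | h <;> rw [h] <;> constructor <;> linarith
    · rw [s3, s0]; rcases hr1 i with h | h <;> rcases hsgn i with ⟨g, -⟩ | ⟨g, -⟩ <;>
        rw [h, g] <;> constructor <;> linarith
  have hMlow : ∀ n c, c < 4 → 2 * M n - 3 ≤ M (4 * n + c) := by
    intro n c hc
    obtain ⟨i, hi⟩ := hMex n
    have h1 := hMle (4 * n + c) (4 * i)
    rw [show 4 * i + (4 * n + c) = 4 * (i + n) + c by ring, s0] at h1
    have h2 := hbd (i + n) c hc
    linarith [h2.1]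
  -- the finite data
  let D : ℕ → Set ((ℕ × ℤ) × (ℕ × ℤ) × ℕ × ℤ) := fun n =>
    {q | q.2.2.1 ≤ 1 ∧ q.2.2.2 ≤ 9 ∧ ∃ i, st i = q.1 ∧ st (i + (n + q.2.2.1)) = q.2.1 ∧
      S (i + (n + q.2.2.1)) - S i = M n - q.2.2.2}
  have hv : ∀ n δ i, δ ≤ 1 → S (i + (n + δ)) - S i ≤ M n + 1 := by
    intro n δ i hδ
    have h1 := hMle (n + δ) i
    have h2 := hMstep n
    interval_cases δ
    · simp only [add_zero] at *; linarith
    · linarith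
  have hDfin : (Set.range D).Finite := by
    let B : Set (ℕ × ℤ) := Set.Icc 0 1 ×ˢ Set.Icc (-1) 1
    have hB : B.Finite := (Set.finite_Icc _ _).prod (Set.finite_Icc _ _)
    have hstB : ∀ i, st i ∈ B := by
      intro i
      have : i % 2 ≤ 1 := by omega
      rcases hr1 i with h | h <;> simp [B, st, h, this]
    have hT : (B ×ˢ B ×ˢ (Set.Icc 0 1 : Set ℕ) ×ˢ (Set.Icc (-1) 9 : Set ℤ)).Finite :=
      hB.prod (hB.prod ((Set.finite_Icc _ _).prod (Set.finite_Icc _ _)))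
    refine hT.finite_subsets.subset ?_
    rintro _ ⟨n, rfl⟩
    rintro ⟨s, t, δ, v⟩ ⟨hδ, hv9, i, hs, ht, hval⟩
    simp only at hδ hv9 hs ht hval
    have := hv n δ i hδ
    exact ⟨hs ▸ hstB _, ht ▸ hstB _, ⟨Nat.zero_le _, hδ⟩, ⟨by linarith, hv9⟩⟩
  have transfer : ∀ n m c δ' i' (v' : ℤ), D n = D m → c < 4 → δ' ≤ 1 → v' ≤ 9 →
      S (i' + (4 * n + c + δ')) - S i' = M (4 * n + c) - v' →
      ∃ j', st j' = st i' ∧ st (j' + (4 * m + c + δ')) = st (i' + (4 * n + c + δ')) ∧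
        S (j' + (4 * m + c + δ')) - S j' - 2 * M m
          = S (i' + (4 * n + c + δ')) - S i' - 2 * M n := by
    intro n m c δ' i' v' hD hc hδ' hv' hval
    obtain ⟨i, a, ha, rfl⟩ : ∃ i a, a < 4 ∧ i' = 4 * i + a := ⟨i' / 4, i' % 4, by omega, by omega⟩
    obtain ⟨δ, b, hδ, hb, hab⟩ : ∃ δ b, δ ≤ 1 ∧ b < 4 ∧ a + c + δ' = 4 * δ + b :=
      ⟨(a + c + δ') / 4, (a + c + δ') % 4, by omega, by omega, by omega⟩
    have e1 : ∀ i n, 4 * i + a + (4 * n + c + δ') = 4 * (i + (n + δ)) + b := by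
      intro i n; omega
    rw [e1] at hval ⊢
    have h1 := hbd i a ha
    have h2 := hbd (i + (n + δ)) b hb
    have h3 := hMlow n c hc
    have hmem : (st i, st (i + (n + δ)), δ, M n - (S (i + (n + δ)) - S i)) ∈ D n := by
      refine ⟨hδ, ?_, i, rfl, rfl, ?_⟩
      · show M n - (S (i + (n + δ)) - S i) ≤ 9
        linarith [h1.1, h1.2, h2.1, h2.2]
      · show S (i + (n + δ)) - S i = M n - (M n - (S (i + (n + δ)) - S i))
        ring
    rw [hD] at hmem
    obtain ⟨-, -, j, hs, ht, hj⟩ := hmem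
    simp only at hs ht hj
    refine ⟨4 * j + a, (hblk j i a ha hs).2, ?_, ?_⟩
    · rw [e1]; exact (hblk _ _ b hb ht).2
    · rw [e1]
      have k1 := (hblk j i a ha hs).1
      have k2 := (hblk _ _ b hb ht).1
      linarith
  have hMd : ∀ c < 4, ∀ n m, D n = D m → M (4 * n + c) - 2 * M n ≤ M (4 * m + c) - 2 * M m := by
    intro c hc n m hD
    obtain ⟨i, hi⟩ := hMex (4 * n + c)
    obtain ⟨j, -, -, hj⟩ := transfer n m c 0 i 0 hD hc (by norm_num) (by norm_num)
      (by simpa using hi)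
    simp only [add_zero] at hj
    have := hMle (4 * m + c) j
    linarith
  have hsub : ∀ c < 4, ∀ n m, D n = D m → D (4 * n + c) ⊆ D (4 * m + c) := by
    intro c hc n m hD
    rintro ⟨s, t, δ, v⟩ ⟨hδ, hv9, i, hs, ht, hval⟩
    simp only at hδ hv9 hs ht hval
    obtain ⟨j, k1, k2, k3⟩ := transfer n m c δ i v hD hc hδ hv9 hval
    have l1 := hMd c hc n m hD
    have l2 := hMd c hc m n hD.symm
    refine ⟨hδ, hv9, j, k1.trans hs, k2.trans ht, ?_⟩
    show S (j + (4 * m + c + δ)) - S j = M (4 * m + c) - v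
    linarith
  refine kernel2_finite_of_factor D hDfin
    (fun c hc n m hD => (hsub c hc n m hD).antisymm (hsub c hc m n hD.symm)) _ ?_
  have hle : ∀ n m, D n = D m → M (n + 1) - M n ≤ M (m + 1) - M m := by
    intro n m hD
    obtain ⟨i, hi⟩ := hMex (n + 1)
    have hmem : (st i, st (i + (n + 1)), 1, M n - M (n + 1)) ∈ D n := by
      refine ⟨le_refl _, ?_, i, rfl, rfl, ?_⟩
      · show M n - M (n + 1) ≤ 9
        linarith [(hMstep n).2]
      · show S (i + (n + 1)) - S i = M n - (M n - M (n + 1))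
        linarith
    rw [hD] at hmem
    obtain ⟨-, -, j, -, -, hj⟩ := hmem
    simp only at hj
    have := hMle (m + 1) j
    linarith
  intro n m hD
  exact le_antisymm (hle n m hD) (hle m n hD.symm)
end

section
/- The abelian complexity function (ρ(n))_{n ≥ 0} of the Rudin-Shapiro sequence (with ρ(0) = 1) is 2-regular, i.e., the ℤ-submodule of the module of all integer sequences generated by the 2-kernel {(ρ(2^e n + c))_{n≥0} : e ≥ 0, 0 ≤ c < 2^e} is finitely generated. -/
namespace RS

/-- The defining recurrences of the Rudin–Shapiro sequence. -/
structure IsRS (r : ℕ → ℤ) : Prop where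
  zero : r 0 = 1
  even : ∀ n, r (2 * n) = r n
  odd : ∀ n, r (2 * n + 1) = (-1) ^ n * r n

/-- Sum of the factor of length `n` starting at `i`. -/
def W (r : ℕ → ℤ) (i n : ℕ) : ℤ := ∑ j ∈ Finset.range n, r (i + j)

lemma W_zero (r : ℕ → ℤ) (i : ℕ) : W r i 0 = 0 := by simp [W]

lemma W_succ (r : ℕ → ℤ) (i n : ℕ) : W r i (n + 1) = W r i n + r (i + n) := by
  simp [W, Finset.sum_range_succ]

lemma W_slide (r : ℕ → ℤ) (i n : ℕ) : W r (i + 1) n = W r i n - r i + r (i + n) := by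
  induction n with
  | zero => simp [W_zero]
  | succ n ih =>
    rw [W_succ, W_succ, ih, show i + 1 + n = i + (n + 1) by ring]
    ring

namespace IsRS

lemma pm {r : ℕ → ℤ} (h : IsRS r) (n : ℕ) : r n = 1 ∨ r n = -1 := by
  induction n using Nat.strong_induction_on with
  | _ n ih =>
    rcases Nat.even_or_odd' n with ⟨k, rfl | rfl⟩
    · rcases Nat.eq_zero_or_pos k with rfl | hk
      · left; exact h.zero
      · rw [h.even]; exact ih k (by omega)
    · rw [h.odd]
      rcases ih k (by omega) with h1 | h1 <;> rcases neg_one_pow_eq_or ℤ k with h2 | h2 <;>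
        simp [h1, h2]

lemma q_even {r : ℕ → ℤ} (h : IsRS r) (k : ℕ) : r (2 * (2 * k) + 1) = r (2 * k) := by
  rw [h.odd]; simp

lemma q_odd {r : ℕ → ℤ} (h : IsRS r) (k : ℕ) : r (2 * (2 * k + 1) + 1) = - r (2 * k + 1) := by
  rw [h.odd (2 * k + 1)]; simp [pow_succ]

lemma r0 {r : ℕ → ℤ} (h : IsRS r) (i : ℕ) : r (4 * i) = r i := by
  rw [show 4 * i = 2 * (2 * i) by ring, h.even, h.even]

lemma r1 {r : ℕ → ℤ} (h : IsRS r) (i : ℕ) : r (4 * i + 1) = r i := by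
  rw [show 4 * i + 1 = 2 * (2 * i) + 1 by ring, h.q_even, h.even]

lemma r2 {r : ℕ → ℤ} (h : IsRS r) (i : ℕ) : r (4 * i + 2) = r (2 * i + 1) := by
  rw [show 4 * i + 2 = 2 * (2 * i + 1) by ring, h.even]

lemma r3 {r : ℕ → ℤ} (h : IsRS r) (i : ℕ) : r (4 * i + 3) = - r (2 * i + 1) := by
  rw [show 4 * i + 3 = 2 * (2 * i + 1) + 1 by ring, h.q_odd]

lemma q0 {r : ℕ → ℤ} (h : IsRS r) (i : ℕ) : r (2 * (4 * i) + 1) = r i := by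
  rw [show 4 * i = 2 * (2 * i) by ring, h.q_even, h.even, h.even]

lemma q1 {r : ℕ → ℤ} (h : IsRS r) (i : ℕ) : r (2 * (4 * i + 1) + 1) = - r i := by
  rw [show 4 * i + 1 = 2 * (2 * i) + 1 by ring, h.q_odd, h.q_even, h.even]

lemma q2 {r : ℕ → ℤ} (h : IsRS r) (i : ℕ) : r (2 * (4 * i + 2) + 1) = r (2 * i + 1) := by
  rw [show 4 * i + 2 = 2 * (2 * i + 1) by ring, h.q_even, h.even]

lemma q3 {r : ℕ → ℤ} (h : IsRS r) (i : ℕ) : r (2 * (4 * i + 3) + 1) = r (2 * i + 1) := by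
  rw [show 4 * i + 3 = 2 * (2 * i + 1) + 1 by ring, h.q_odd, h.q_odd, neg_neg]

lemma block {r : ℕ → ℤ} (h : IsRS r) (i n : ℕ) : W r (4 * i) (4 * n) = 2 * W r i n := by
  induction n with
  | zero => simp [W_zero]
  | succ n ih =>
    rw [show 4 * (n + 1) = 4 * n + 1 + 1 + 1 + 1 by ring, W_succ, W_succ, W_succ, W_succ, ih, W_succ,
      show 4 * i + 4 * n = 4 * (i + n) by ring,
      show 4 * i + (4 * n + 1) = 4 * (i + n) + 1 by ring,
      show 4 * i + (4 * n + 1 + 1) = 4 * (i + n) + 2 by ring,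
      show 4 * i + (4 * n + 1 + 1 + 1) = 4 * (i + n) + 3 by ring, h.r0, h.r1, h.r2, h.r3]
    ring

lemma block1 {r : ℕ → ℤ} (h : IsRS r) (i n : ℕ) : W r (4 * i + 1) (4 * n) = 2 * W r i n - r i + r (i + n) := by
  rw [W_slide, h.block, show 4 * i + 4 * n = 4 * (i + n) by ring, h.r0, h.r0]

lemma block2 {r : ℕ → ℤ} (h : IsRS r) (i n : ℕ) : W r (4 * i + 2) (4 * n) = 2 * W r i n - 2 * r i + 2 * r (i + n) := by
  rw [show 4 * i + 2 = 4 * i + 1 + 1 by ring, W_slide, h.block1,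
    show 4 * i + 1 + 4 * n = 4 * (i + n) + 1 by ring, h.r1, h.r1]
  ring

lemma block3 {r : ℕ → ℤ} (h : IsRS r) (i n : ℕ) : W r (4 * i + 3) (4 * n) =
    2 * W r (i + 1) n - r (2 * i + 1) + r (2 * (i + n) + 1) := by
  rw [show 4 * i + 3 = 4 * i + 2 + 1 by ring, W_slide, h.block2,
    show 4 * i + 2 + 4 * n = 4 * (i + n) + 2 by ring, h.r2, h.r2, W_slide]
  ring

lemma parity {r : ℕ → ℤ} (h : IsRS r) (i n : ℕ) : ∃ k : ℤ, W r i n = n + 2 * k := by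
  induction n with
  | zero => exact ⟨0, by simp [W_zero]⟩
  | succ n ih =>
    obtain ⟨k, hk⟩ := ih
    rw [W_succ, hk]
    rcases h.pm (i + n) with h1 | h1
    · exact ⟨k, by rw [h1]; push_cast; ring⟩
    · exact ⟨k - 1, by rw [h1]; push_cast; ring⟩

lemma flip {r : ℕ → ℤ} (h : IsRS r) (k : ℕ) : ∀ x < 2 ^ k, r (6 * 2 ^ k + x) = - r x := by
  induction k with
  | zero =>
    intro x hx
    have : x = 0 := by simpa using hx
    subst this
    have := h.r2 1
    have h3 := h.r3 0
    have h1 := h.r1 0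
    norm_num at *
    linarith
  | succ k ih =>
    intro x hx
    rw [pow_succ] at hx ⊢
    rcases Nat.even_or_odd' x with ⟨y, rfl | rfl⟩
    · rw [show 6 * (2 ^ k * 2) + 2 * y = 2 * (6 * 2 ^ k + y) by ring, h.even, h.even,
        ih y (by omega)]
    · rw [show 6 * (2 ^ k * 2) + (2 * y + 1) = 2 * (6 * 2 ^ k + y) + 1 by ring, h.odd, h.odd,
        ih y (by omega), pow_add, pow_mul]
      norm_num

lemma W_flip {r : ℕ → ℤ} (h : IsRS r) (i n : ℕ) : ∃ T, W r (T + i) n = - W r i n := by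
  refine ⟨6 * 2 ^ (i + n), ?_⟩
  unfold W
  rw [← Finset.sum_neg_distrib]
  refine Finset.sum_congr rfl fun j hj => ?_
  rw [add_assoc]
  apply h.flip
  have := Finset.mem_range.1 hj
  exact lt_trans (by omega) (Nat.lt_two_pow_self (n := i + n))

/-- `v` is the maximal sum of a factor of length `n`, attained at a good position. -/
def P (r : ℕ → ℤ) (n : ℕ) (v : ℤ) : Prop :=
  (∀ i, W r i n ≤ v) ∧ ∃ u, W r (u + 1) n = v ∧ r (2 * u + 1) = -1 ∧ r (2 * (u + n) + 1) = 1

lemma mod4 (k : ℕ) : ∃ i, k = 4 * i ∨ k = 4 * i + 1 ∨ k = 4 * i + 2 ∨ k = 4 * i + 3 :=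
  ⟨k / 4, by omega⟩

lemma ub0 {r : ℕ → ℤ} (h : IsRS r) {n : ℕ} {v : ℤ} (hv : ∀ i, W r i n ≤ v) (k : ℕ) : W r k (4 * n) ≤ 2 * v + 2 := by
  obtain ⟨i, rfl | rfl | rfl | rfl⟩ := mod4 k
  all_goals
    have a := hv i
    have b := hv (i + 1)
    have c := W_slide r i n
    have p1 := h.pm i
    have p2 := h.pm (i + n)
    have p3 := h.pm (2 * i + 1)
    have p4 := h.pm (2 * (i + n) + 1)
  · rw [h.block]; omega
  · rw [h.block1]; omega
  · rw [h.block2]; omega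
  · rw [h.block3]; omega

lemma ub1 {r : ℕ → ℤ} (h : IsRS r) {n : ℕ} {v : ℤ} (hv : ∀ i, W r i n ≤ v) (k : ℕ) : W r k (4 * n + 1) ≤ 2 * v + 1 := by
  rw [W_succ]
  obtain ⟨i, rfl | rfl | rfl | rfl⟩ := mod4 k
  all_goals
    have a := hv i
    have b := hv (i + 1)
    have c := W_slide r i n
    have p1 := h.pm i
    have p2 := h.pm (i + n)
    have p3 := h.pm (2 * i + 1)
    have p4 := h.pm (2 * (i + n) + 1)
  · rw [h.block, show 4 * i + 4 * n = 4 * (i + n) by ring, h.r0]; omega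
  · rw [h.block1, show 4 * i + 1 + 4 * n = 4 * (i + n) + 1 by ring, h.r1]; omega
  · rw [h.block2, show 4 * i + 2 + 4 * n = 4 * (i + n) + 2 by ring, h.r2]; omega
  · rw [h.block3, show 4 * i + 3 + 4 * n = 4 * (i + n) + 3 by ring, h.r3]; omega

lemma ub3 {r : ℕ → ℤ} (h : IsRS r) {n : ℕ} {v : ℤ} (hv : ∀ i, W r i (n + 1) ≤ v) (k : ℕ) :
    W r k (4 * n + 3) ≤ 2 * v + 1 := by
  have e := W_succ r k (4 * n + 3)
  rw [show 4 * n + 3 + 1 = 4 * (n + 1) by ring] at e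
  obtain ⟨i, rfl | rfl | rfl | rfl⟩ := mod4 k
  all_goals
    have a := hv i
    have b := hv (i + 1)
    have c := W_slide r i (n + 1)
    have p1 := h.pm i
    have p2 := h.pm (i + (n + 1))
    have p3 := h.pm (2 * i + 1)
    have p4 := h.pm (2 * (i + (n + 1)) + 1)
    have p5 := h.pm (2 * (i + n) + 1)
  · rw [h.block, show 4 * i + (4 * n + 3) = 4 * (i + n) + 3 by ring, h.r3] at e; omega
  · rw [h.block1, show 4 * i + 1 + (4 * n + 3) = 4 * (i + (n + 1)) by ring, h.r0] at e; omega
  · rw [h.block2, show 4 * i + 2 + (4 * n + 3) = 4 * (i + (n + 1)) + 1 by ring, h.r1] at e; omega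
  · rw [h.block3, show 4 * i + 3 + (4 * n + 3) = 4 * (i + (n + 1)) + 2 by ring, h.r2] at e; omega

lemma P0 {r : ℕ → ℤ} (h : IsRS r) {n : ℕ} {v : ℤ} (hp : P r n v) : P r (4 * n) (2 * v + 2) := by
  obtain ⟨hv, u, h1, h2, h3⟩ := hp
  refine ⟨h.ub0 hv, 4 * u + 2, ?_, ?_, ?_⟩
  · rw [show 4 * u + 2 + 1 = 4 * u + 3 by ring, h.block3]; omega
  · rw [h.q2, h2]
  · rw [show 4 * u + 2 + 4 * n = 4 * (u + n) + 2 by ring, h.q2, h3]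

lemma P1 {r : ℕ → ℤ} (h : IsRS r) {n : ℕ} {v : ℤ} (hp : P r n v) : P r (4 * n + 1) (2 * v + 1) := by
  obtain ⟨hv, u, h1, h2, h3⟩ := hp
  refine ⟨h.ub1 hv, 4 * u + 2, ?_, ?_, ?_⟩
  · rw [show 4 * u + 2 + 1 = 4 * u + 3 by ring, W_succ, h.block3,
      show 4 * u + 3 + 4 * n = 4 * (u + n) + 3 by ring, h.r3]; omega
  · rw [h.q2, h2]
  · rw [show 4 * u + 2 + (4 * n + 1) = 4 * (u + n) + 3 by ring, h.q3, h3]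

lemma P3 {r : ℕ → ℤ} (h : IsRS r) {n : ℕ} {v : ℤ} (hp : P r (n + 1) v) : P r (4 * n + 3) (2 * v + 1) := by
  obtain ⟨hv, u, h1, h2, h3⟩ := hp
  refine ⟨h.ub3 hv, 4 * u + 3, ?_, ?_, ?_⟩
  · have e1 := W_slide r (4 * u + 3) (4 * n + 3)
    have e2 := W_succ r (4 * u + 3) (4 * n + 3)
    rw [show 4 * n + 3 + 1 = 4 * (n + 1) by ring, h.block3] at e2
    rw [h.r3] at e1
    omega
  · rw [h.q3, h2]
  · rw [show 4 * u + 3 + (4 * n + 3) = 4 * (u + (n + 1)) + 2 by ring, h.q2, h3]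

/-- Attainment for length `4 n + 2` from length `n`. -/
lemma att2a {r : ℕ → ℤ} (h : IsRS r) {n : ℕ} {v : ℤ} (hp : P r n v) : ∃ u, W r (u + 1) (4 * n + 2) = 2 * v ∧
    r (2 * u + 1) = -1 ∧ r (2 * (u + (4 * n + 2)) + 1) = 1 := by
  obtain ⟨hv, u, h1, h2, h3⟩ := hp
  have b := h.block2 u n
  have c := W_slide r u n
  rcases h.pm u with hu | hu
  · refine ⟨4 * u + 1, ?_, ?_, ?_⟩
    · rw [show 4 * u + 1 + 1 = 4 * u + 2 by ring, W_succ, W_succ, b,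
        show 4 * u + 2 + (4 * n + 1) = 4 * (u + n) + 3 by ring,
        show 4 * u + 2 + (4 * n) = 4 * (u + n) + 2 by ring, h.r2, h.r3]
      omega
    · rw [h.q1, hu]
    · rw [show 4 * u + 1 + (4 * n + 2) = 4 * (u + n) + 3 by ring, h.q3, h3]
  · refine ⟨4 * u, ?_, ?_, ?_⟩
    · rw [W_succ, W_succ, h.block1,
        show 4 * u + 1 + (4 * n + 1) = 4 * (u + n) + 2 by ring,
        show 4 * u + 1 + (4 * n) = 4 * (u + n) + 1 by ring, h.r2, h.r1]
      omega
    · rw [h.q0, hu]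
    · rw [show 4 * u + (4 * n + 2) = 4 * (u + n) + 2 by ring, h.q2, h3]

/-- Attainment for length `4 n + 2` from length `n + 1`. -/
lemma att2b {r : ℕ → ℤ} (h : IsRS r) {n : ℕ} {v : ℤ} (hp : P r (n + 1) v) : ∃ u, W r (u + 1) (4 * n + 2) = 2 * v ∧
    r (2 * u + 1) = -1 ∧ r (2 * (u + (4 * n + 2)) + 1) = 1 := by
  obtain ⟨hv, u, h1, h2, h3⟩ := hp
  have b := h.block3 u (n + 1)
  rw [show 4 * (n + 1) = 4 * n + 2 + 1 + 1 by ring, W_succ, W_succ,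
    show 4 * u + 3 + (4 * n + 2 + 1) = 4 * (u + (n + 1)) + 2 by ring,
    show 4 * u + 3 + (4 * n + 2) = 4 * (u + (n + 1)) + 1 by ring, h.r2, h.r1] at b
  rcases h.pm (u + (n + 1)) with hu | hu
  · refine ⟨4 * u + 2, ?_, ?_, ?_⟩
    · rw [show 4 * u + 2 + 1 = 4 * u + 3 by ring]
      omega
    · rw [h.q2, h2]
    · rw [show 4 * u + 2 + (4 * n + 2) = 4 * (u + (n + 1)) by ring, h.q0, hu]
  · refine ⟨4 * u + 3, ?_, ?_, ?_⟩
    · rw [W_slide, show 4 * u + 3 + (4 * n + 2) = 4 * (u + (n + 1)) + 1 by ring, h.r1, h.r3]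
      omega
    · rw [h.q3, h2]
    · rw [show 4 * u + 3 + (4 * n + 2) = 4 * (u + (n + 1)) + 1 by ring, h.q1, hu]; norm_num

lemma P_par {r : ℕ → ℤ} (h : IsRS r) {n : ℕ} {v : ℤ} (hp : P r n v) : ∃ k : ℤ, v = n + 2 * k := by
  obtain ⟨hv, u, h1, h2, h3⟩ := hp
  rw [← h1]; exact h.parity _ _

lemma P2 {r : ℕ → ℤ} (h : IsRS r) {n : ℕ} {v w : ℤ} (hp : P r n v) (hq : P r (n + 1) w) :
    P r (4 * n + 2) (v + w + 1) := by
  obtain ⟨k, hk⟩ := h.P_par hp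
  obtain ⟨l, hl⟩ := h.P_par hq
  have ub (i : ℕ) : W r i (4 * n + 2) ≤ 2 * v + 2 := by
    have := h.ub1 hp.1 i
    have e := W_succ r i (4 * n + 1)
    have := h.pm (i + (4 * n + 1))
    rw [show 4 * n + 1 + 1 = 4 * n + 2 by ring] at e
    omega
  have ub' (i : ℕ) : W r i (4 * n + 2) ≤ 2 * w + 2 := by
    have := h.ub3 hq.1 i
    have e := W_succ r i (4 * n + 2)
    have := h.pm (i + (4 * n + 2))
    rw [show 4 * n + 2 + 1 = 4 * n + 3 by ring] at e
    omega
  have d1 : w ≤ v + 1 := by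
    obtain ⟨u, h1, -, -⟩ := hq.2
    have := W_succ r (u + 1) n
    have := hp.1 (u + 1)
    have := h.pm (u + 1 + n)
    omega
  have d2 : v ≤ w + 1 := by
    obtain ⟨u, h1, -, -⟩ := hp.2
    have := W_succ r (u + 1) n
    have := hq.1 (u + 1)
    have := h.pm (u + 1 + n)
    omega
  have : w = v + 1 ∨ w = v - 1 := by push_cast at hl; omega
  rcases this with rfl | rfl
  · refine ⟨fun i => by have := ub i; omega, ?_⟩
    rw [show v + (v + 1) + 1 = 2 * (v + 1) by ring]
    exact h.att2b hq
  · refine ⟨fun i => by have := ub' i; omega, ?_⟩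
    rw [show v + (v - 1) + 1 = 2 * v by ring]
    exact h.att2a hp

lemma Pone {r : ℕ → ℤ} (h : IsRS r) : P r 1 1 := by
  refine ⟨fun i => ?_, 1, ?_, ?_, ?_⟩
  · rw [show 1 = 0 + 1 by rfl, W_succ, W_zero]; have := h.pm (i + 0); omega
  · have := h.r2 0
    have := h.r1 0
    have := h.zero
    simp_all [W]
  · have := h.r3 0
    have := h.r1 0
    have := h.zero
    simp_all
  · have := h.r1 1
    have := h.r1 0
    have := h.zero
    simp_all

lemma Ptwo {r : ℕ → ℤ} (h : IsRS r) : P r 2 2 := by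
  refine ⟨fun i => ?_, h.att2b (n := 0) (v := 1) h.Pone⟩
  have e1 := W_succ r i 1
  have e2 := W_succ r i 0
  rw [W_zero] at e2
  have := h.pm (i + 0)
  have := h.pm (i + 1)
  norm_num at *
  omega

lemma exP {r : ℕ → ℤ} (h : IsRS r) (n : ℕ) (hn : 1 ≤ n) : ∃ v, P r n v := by
  induction n using Nat.strong_induction_on with
  | _ n ih =>
    rcases Nat.lt_or_ge n 3 with h3 | h3
    · have : n = 1 ∨ n = 2 := by omega
      rcases this with rfl | rfl
      · exact ⟨_, h.Pone⟩
      · exact ⟨_, h.Ptwo⟩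
    · obtain ⟨i, rfl | rfl | rfl | rfl⟩ := mod4 n
      · obtain ⟨v, hv⟩ := ih i (by omega) (by omega)
        exact ⟨_, h.P0 hv⟩
      · obtain ⟨v, hv⟩ := ih i (by omega) (by omega)
        exact ⟨_, h.P1 hv⟩
      · obtain ⟨v, hv⟩ := ih i (by omega) (by omega)
        obtain ⟨w, hw⟩ := ih (i + 1) (by omega) (by omega)
        exact ⟨_, h.P2 hv hw⟩
      · obtain ⟨w, hw⟩ := ih (i + 1) (by omega) (by omega)
        exact ⟨_, h.P3 hw⟩

/-- Discrete intermediate value theorem (descending). -/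
lemma ivt (f : ℕ → ℤ) (hf : ∀ i, f i - 1 ≤ f (i + 1)) (a d : ℕ) (y : ℤ)
    (h1 : f (a + d) ≤ y) (h2 : y ≤ f a) : ∃ i, f i = y := by
  induction d with
  | zero => exact ⟨a, by simp at h1; omega⟩
  | succ d ih =>
    by_cases hy : f (a + d) ≤ y
    · exact ih hy
    · have := hf (a + d)
      exact ⟨a + (d + 1), by rw [← add_assoc] at *; omega⟩

lemma parikh_pm {r : ℕ → ℤ} (h : IsRS r) (i n : ℕ) :
    (parikh r n i 1 : ℤ) - parikh r n i (-1) = W r i n ∧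
    (parikh r n i 1 : ℤ) + parikh r n i (-1) = n := by
  induction n with
  | zero => simp [parikh, W_zero]
  | succ n ih =>
    rw [W_succ]
    unfold parikh at *
    simp only [Finset.range_add_one, Finset.filter_insert] at *
    rcases h.pm (i + n) with e | e
    · simp [e]; omega
    · simp [e]; omega

lemma parikh_other {r : ℕ → ℤ} (h : IsRS r) (i n : ℕ) (a : ℤ) (h1 : a ≠ 1) (h2 : a ≠ -1) : parikh r n i a = 0 := by
  unfold parikh
  rw [Finset.card_eq_zero, Finset.filter_eq_empty_iff]
  intro j _ e
  rcases h.pm (i + j) with e' | e' <;> omega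

lemma rho {r : ℕ → ℤ} (h : IsRS r) {n : ℕ} {v : ℤ} (hp : P r n v) : (abelianComplexity r n : ℤ) = v + 1 := by
  obtain ⟨k, hk⟩ := h.P_par hp
  have inj : Set.InjOn (fun p : ℤ → ℕ => (p 1 : ℤ)) (Set.range (parikh r n)) := by
    rintro _ ⟨i, rfl⟩ _ ⟨j, rfl⟩ e
    have a := h.parikh_pm i n
    have b := h.parikh_pm j n
    simp only at e
    funext c
    by_cases c1 : c = 1
    · subst c1; exact_mod_cast e
    by_cases c2 : c = -1
    · subst c2; omega
    · rw [h.parikh_other i n c c1 c2, h.parikh_other j n c c1 c2]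
  have img : (fun p : ℤ → ℕ => (p 1 : ℤ)) '' (Set.range (parikh r n)) =
      ((Finset.Icc (-k) (n + k) : Finset ℤ) : Set ℤ) := by
    ext y
    rw [Finset.coe_Icc, Set.mem_Icc]
    constructor
    · rintro ⟨_, ⟨i, rfl⟩, rfl⟩
      have a := h.parikh_pm i n
      have b := hp.1 i
      obtain ⟨T, hT⟩ := h.W_flip i n
      have c := hp.1 (T + i)
      simp only
      omega
    · rintro ⟨y1, y2⟩
      obtain ⟨u, hu, -, -⟩ := hp.2
      obtain ⟨T, hT⟩ := h.W_flip (u + 1) n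
      obtain ⟨i, hi⟩ := ivt (fun i => (parikh r n i 1 : ℤ)) (fun i => by
          have a := h.parikh_pm i n
          have b := h.parikh_pm (i + 1) n
          have c := W_slide r i n
          have d1 := h.pm i
          have d2 := h.pm (i + n)
          omega) (u + 1) T y
        (by
          have a := h.parikh_pm (T + (u + 1)) n
          rw [add_comm (u + 1) T]
          omega)
        (by
          have a := h.parikh_pm (u + 1) n
          omega)
      exact ⟨_, ⟨i, rfl⟩, hi⟩
  have hv : 0 ≤ v := by
    obtain ⟨u, hu, -, -⟩ := hp.2
    obtain ⟨T, hT⟩ := h.W_flip (u + 1) n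
    have := hp.1 (T + (u + 1))
    omega
  unfold abelianComplexity
  rw [← inj.ncard_image, img, Set.ncard_coe_finset, Int.card_Icc]
  omega

lemma rho_zero (r : ℕ → ℤ) : (abelianComplexity r 0 : ℤ) = 1 := by
  have : Set.range (parikh r 0) = {fun _ => 0} := by
    ext y
    simp [parikh, eq_comm, funext_iff]
  unfold abelianComplexity
  rw [this]; simp

lemma rec0 {r : ℕ → ℤ} (h : IsRS r) (n : ℕ) : (abelianComplexity r (4 * n) : ℤ) =
    2 * abelianComplexity r n + 1 - 2 * (if n = 0 then 1 else 0) := by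
  rcases Nat.eq_zero_or_pos n with rfl | hn
  · simp [rho_zero r]
  · obtain ⟨v, hv⟩ := h.exP n hn
    rw [h.rho hv, h.rho (h.P0 hv), if_neg (by omega)]; ring

lemma rec1 {r : ℕ → ℤ} (h : IsRS r) (n : ℕ) : (abelianComplexity r (4 * n + 1) : ℤ) = 2 * abelianComplexity r n := by
  rcases Nat.eq_zero_or_pos n with rfl | hn
  · rw [rho_zero r, mul_zero, zero_add, h.rho h.Pone]; norm_num
  · obtain ⟨v, hv⟩ := h.exP n hn
    rw [h.rho hv, h.rho (h.P1 hv)]; ring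

lemma rec2 {r : ℕ → ℤ} (h : IsRS r) (n : ℕ) : (abelianComplexity r (4 * n + 2) : ℤ) =
    abelianComplexity r n + abelianComplexity r (n + 1) := by
  rcases Nat.eq_zero_or_pos n with rfl | hn
  · rw [rho_zero r, mul_zero, zero_add, zero_add, h.rho h.Pone, h.rho h.Ptwo]; norm_num
  · obtain ⟨v, hv⟩ := h.exP n hn
    obtain ⟨w, hw⟩ := h.exP (n + 1) (by omega)
    rw [h.rho hv, h.rho hw, h.rho (h.P2 hv hw)]; ring

lemma rec3 {r : ℕ → ℤ} (h : IsRS r) (n : ℕ) : (abelianComplexity r (4 * n + 3) : ℤ) = 2 * abelianComplexity r (n + 1) := by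
  obtain ⟨w, hw⟩ := h.exP (n + 1) (by omega)
  rw [h.rho hw, h.rho (h.P3 hw)]; ring

end IsRS

/-- The decimation `g ↦ (g (a n + c))ₙ` as a linear map. -/
def dec (a c : ℕ) : (ℕ → ℤ) →ₗ[ℤ] (ℕ → ℤ) := LinearMap.funLeft ℤ ℤ (fun n => a * n + c)

lemma dec_apply (a c : ℕ) (g : ℕ → ℤ) (n : ℕ) : dec a c g n = g (a * n + c) := rfl

lemma fg_of_closed (f : ℕ → ℤ) (N : Submodule ℤ (ℕ → ℤ)) (hN : N.FG) (hf : f ∈ N)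
    (hc : ∀ c < 4, ∀ g ∈ N, dec 4 c g ∈ N) : (Submodule.span ℤ (kernel2 f)).FG := by
  have key : ∀ k c, c < 4 ^ k → ∀ g ∈ N, dec (4 ^ k) c g ∈ N := by
    intro k
    induction k with
    | zero =>
      intro c hc' g hg
      have : c = 0 := by simpa using hc'
      subst this
      convert hg using 1
      funext n
      simp [dec_apply]
    | succ k ih =>
      intro c hc' g hg
      rw [pow_succ] at hc'
      have := ih (c / 4) (by omega) _ (hc (c % 4) (by omega) g hg)
      convert this using 1
      funext n
      simp only [dec_apply]
      congr 1
      have := Nat.div_add_mod c 4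
      rw [mul_add, pow_succ]
      nlinarith
  have hT : (N ⊔ (N.map (dec 2 0) ⊔ N.map (dec 2 1))).FG :=
    hN.sup ((hN.map _).sup (hN.map _))
  have hle : Submodule.span ℤ (kernel2 f) ≤ N ⊔ (N.map (dec 2 0) ⊔ N.map (dec 2 1)) := by
    rw [Submodule.span_le]
    rintro _ ⟨e, c, hce, rfl⟩
    rcases Nat.even_or_odd' e with ⟨k, rfl | rfl⟩
    · have e4 : 2 ^ (2 * k) = 4 ^ k := by rw [pow_mul]; norm_num
      rw [e4] at hce ⊢
      exact Submodule.mem_sup_left (key k c hce f hf)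
    · have e4 : 2 ^ (2 * k + 1) = 4 ^ k * 2 := by rw [pow_succ, pow_mul]; norm_num
      rw [e4] at hce ⊢
      refine Submodule.mem_sup_right ?_
      by_cases hlt : c < 4 ^ k
      · refine Submodule.mem_sup_left ⟨_, key k c hlt f hf, ?_⟩
        funext n
        simp only [dec_apply]
        congr 1; ring
      · refine Submodule.mem_sup_right ⟨_, key k (c - 4 ^ k) (by omega) f hf, ?_⟩
        funext n
        simp only [dec_apply]
        congr 1
        rw [mul_add, mul_one, mul_assoc]; omega
  have : IsNoetherian ℤ (N ⊔ (N.map (dec 2 0) ⊔ N.map (dec 2 1)) : Submodule ℤ (ℕ → ℤ)) :=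
    isNoetherian_of_fg_of_noetherian _ hT
  have := isNoetherian_of_le hle
  exact (Submodule.fg_top _).1 (IsNoetherian.noetherian _)

end RS

open RS

/-- The abelian complexity function `(ρ(n))ₙ` of the
Rudin–Shapiro sequence (with `ρ(0) = 1`) is 2-regular: the ℤ-submodule of
the module of all integer sequences generated by its 2-kernel is finitely
generated. -/
theorem abelianComplexity_two_regular
    (r : ℕ → ℤ) (hr0 : r 0 = 1)
    (hre : ∀ n, r (2 * n) = r n)
    (hro : ∀ n, r (2 * n + 1) = (-1) ^ n * r n) :
    (Submodule.span ℤ (kernel2 fun n => (abelianComplexity r n : ℤ))).FG := by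
  have h : IsRS r := ⟨hr0, hre, hro⟩
  set f : ℕ → ℤ := fun n => (abelianComplexity r n : ℤ) with hf
  set f1 : ℕ → ℤ := fun n => f (n + 1) with hf1
  set o : ℕ → ℤ := fun _ => 1 with ho
  set δ : ℕ → ℤ := fun n => if n = 0 then 1 else 0 with hδ
  set N : Submodule ℤ (ℕ → ℤ) := Submodule.span ℤ {f, f1, o, δ} with hN
  have mf : f ∈ N := Submodule.subset_span (by simp)
  have mf1 : f1 ∈ N := Submodule.subset_span (by simp)
  have mo : o ∈ N := Submodule.subset_span (by simp)
  have mδ : δ ∈ N := Submodule.subset_span (by simp)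
  have R0 : ∀ n, f (4 * n) = 2 * f n + 1 - 2 * δ n := h.rec0
  have R1 : ∀ n, f (4 * n + 1) = 2 * f n := h.rec1
  have R2 : ∀ n, f (4 * n + 2) = f n + f (n + 1) := h.rec2
  have R3 : ∀ n, f (4 * n + 3) = 2 * f (n + 1) := h.rec3
  have D0 : dec 4 0 f = (2 : ℤ) • f + o - (2 : ℤ) • δ := by
    funext n; simp [dec_apply, R0, ho]
  have D1 : dec 4 1 f = (2 : ℤ) • f := by
    funext n; simp [dec_apply, R1]
  have D2 : dec 4 2 f = f + f1 := by
    funext n; simp [dec_apply, R2, hf1]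
  have D3 : dec 4 3 f = (2 : ℤ) • f1 := by
    funext n; simp [dec_apply, R3, hf1]
  have E3 : dec 4 3 f1 = (2 : ℤ) • f1 + o := by
    funext n
    have := R0 (n + 1)
    simp only [dec_apply, hf1, ho, Pi.add_apply, Pi.smul_apply, smul_eq_mul]
    rw [show 4 * n + 3 + 1 = 4 * (n + 1) by ring, this]
    simp [hδ]
  have E (c : ℕ) : dec 4 c f1 = dec 4 (c + 1) f := by
    funext n; simp [dec_apply, hf1, add_assoc]
  refine fg_of_closed f N (Submodule.fg_span (Set.toFinite _)) mf ?_
  intro c hc g hg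
  have m0 : dec 4 0 f ∈ N := by
    rw [D0]; exact N.sub_mem (N.add_mem (N.smul_mem _ mf) mo) (N.smul_mem _ mδ)
  have m1 : dec 4 1 f ∈ N := by rw [D1]; exact N.smul_mem _ mf
  have m2 : dec 4 2 f ∈ N := by rw [D2]; exact N.add_mem mf mf1
  have m3 : dec 4 3 f ∈ N := by rw [D3]; exact N.smul_mem _ mf1
  have m4 : dec 4 3 f1 ∈ N := by rw [E3]; exact N.add_mem (N.smul_mem _ mf1) mo
  suffices hle : N ≤ N.comap (dec 4 c) from hle hg
  rw [hN, Submodule.span_le, ← hN]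
  rintro x (rfl | rfl | rfl | rfl)
  · interval_cases c <;> assumption
  · interval_cases c
    · change dec 4 0 f1 ∈ N
      rw [E]; exact m1
    · change dec 4 1 f1 ∈ N
      rw [E]; exact m2
    · change dec 4 2 f1 ∈ N
      rw [E]; exact m3
    · exact m4
  · exact mo
  · rcases Nat.eq_zero_or_pos c with rfl | hc0
    · have : dec 4 0 δ = δ := by
        funext n; simp [dec_apply, hδ]
      change dec 4 0 δ ∈ N
      rw [this]; exact mδ
    · have : dec 4 c δ = 0 := by
        funext n
        simp only [dec_apply, hδ, Pi.zero_apply]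
        rw [if_neg (by omega)]
      change dec 4 c δ ∈ N
      rw [this]; exact N.zero_mem
end
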